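/- arXiv:2102.04200 — 8 statements merged into one kernel-verified Lean document; each statement's English description precedes it below -/
import Mathlib

section
/- Let X be a discrete random variable taking values in the lattice {x₀ + kΔ : k ∈ ℤ} for some x₀ ∈ ℝ and Δ > 0, and let U be a continuous real random variable, independent of X, whose support is contained in an interval of length at most Δ. Then for every α > 0 (including the Shannon case α = 1), H_α(X) = h_α(X + U) − h_α(U), whenever these quantities are defined. In particular, if U is uniformly distributed on an interval of length Δ, then H_α(X) = h_α(X + U) − ln Δ. -/
/-!
Cut the real line into the half-open cells `x₀ + kΔ + (a, a + Δ]`. Almost surely `U` lies in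
`(a, a + Δ]`, so `X + U` lies in the `k`-th cell exactly when `X = x₀ + kΔ`. By independence the
density of `X + U` on that cell is `p k * χ (x - (x₀ + kΔ))` (`density_on_cell`): the density `f` is
a juxtaposition of disjoint translates of multiples of `χ`. Hence for every `G` with `G 0 = 0` and
`G ∘ f` integrable, `∫ G (f x) dx = ∑ₖ ∫ G (p k * χ u) du` (`hasSum_integral_comp`).

* `G t = t` gives `∑ₖ p k = 1`.
* `G t = t ^ α` factors: `∫ f ^ α = (∑ₖ p k ^ α) * ∫ χ ^ α`, where both factors are positive, so the
  logarithm turns the product into a sum.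
* `G t = -t log t` satisfies `G (s t) = t G s + s G t`; since `∫ χ = ∑ₖ p k = 1`, this gives
  `∫ G (f x) dx = ∑ₖ G (p k) + ∫ G (χ u) du`.
-/

open MeasureTheory Real

/-- Discrete Rényi entropy of order `α` (Shannon entropy when `α = 1`),
with natural logarithms. -/
noncomputable def discreteRenyiEntropy (α : ℝ) (p : ℤ → ℝ) : ℝ :=
  if α = 1 then ∑' k, p k * Real.log (1 / p k)
  else (1 / (1 - α)) * Real.log (∑' k, p k ^ α)

/-- Differential Rényi entropy of order `α` (differential entropy when `α = 1`)
of a density `f` on `ℝ`, with natural logarithms. -/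
noncomputable def diffRenyiEntropy (α : ℝ) (f : ℝ → ℝ) : ℝ :=
  if α = 1 then ∫ x, f x * Real.log (1 / f x)
  else (1 / (1 - α)) * Real.log (∫ x, f x ^ α)

/-- The `k`-th cell `x₀ + kΔ + (a, a + Δ]`, written as the preimage of `(a, a + Δ]` under the
translation by `-(x₀ + kΔ)`. -/
def masseyCell (x₀ Δ a : ℝ) (k : ℤ) : Set ℝ :=
  (fun x : ℝ => x - (x₀ + (k : ℝ) * Δ)) ⁻¹' Set.Ioc a (a + Δ)

lemma measurableSet_masseyCell (x₀ Δ a : ℝ) (k : ℤ) : MeasurableSet (masseyCell x₀ Δ a k) :=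
  (measurable_id.sub_const _) measurableSet_Ioc

lemma masseyCell_unique {x₀ Δ a : ℝ} (hΔ : 0 < Δ) {j k : ℤ} {x : ℝ}
    (hj : x ∈ masseyCell x₀ Δ a j) (hk : x ∈ masseyCell x₀ Δ a k) : j = k := by
  simp only [masseyCell, Set.mem_preimage, Set.mem_Ioc] at hj hk
  have h1 : ((j : ℝ) - k) * Δ < 1 * Δ := by linarith [hj.1, hk.2]
  have h2 : ((k : ℝ) - j) * Δ < 1 * Δ := by linarith [hj.2, hk.1]
  have h3 := lt_of_mul_lt_mul_right h1 hΔ.le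
  have h4 := lt_of_mul_lt_mul_right h2 hΔ.le
  have h5 : j - k < 1 := by exact_mod_cast h3
  have h6 : k - j < 1 := by exact_mod_cast h4
  omega

lemma iUnion_masseyCell {x₀ Δ : ℝ} (a : ℝ) (hΔ : 0 < Δ) :
    ⋃ k, masseyCell x₀ Δ a k = Set.univ := by
  rw [← iUnion_Ioc_add_zsmul hΔ (a + x₀)]
  refine Set.iUnion_congr fun k => ?_
  ext x
  simp only [masseyCell, Set.mem_preimage, Set.mem_Ioc, zsmul_eq_mul, Int.cast_add, Int.cast_one]
  constructor <;> rintro ⟨h1, h2⟩ <;> constructor <;> linarith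

lemma pairwise_disjoint_masseyCell {x₀ Δ : ℝ} (a : ℝ) (hΔ : 0 < Δ) :
    Pairwise (Function.onFun Disjoint (masseyCell x₀ Δ a)) := fun _ _ hjk =>
  Set.disjoint_left.2 fun _ hj hk => hjk (masseyCell_unique hΔ hj hk)

lemma integral_density_eq_one {Ω : Type*} [MeasureSpace Ω]
    [IsProbabilityMeasure (volume : Measure Ω)] {Y : Ω → ℝ} (hY : Measurable Y)
    {g : ℝ → ℝ} (hgm : Measurable g) (hg0 : ∀ x, 0 ≤ g x)
    (hd : Measure.map Y (volume : Measure Ω)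
      = (volume : Measure ℝ).withDensity (fun x => ENNReal.ofReal (g x))) :
    Integrable g ∧ ∫ x, g x = 1 := by
  have h : ∫⁻ x, ENNReal.ofReal (g x) = 1 := by
    rw [← setLIntegral_univ, ← withDensity_apply _ MeasurableSet.univ, ← hd,
      Measure.map_apply hY MeasurableSet.univ]
    simp
  constructor
  · refine ⟨hgm.aestronglyMeasurable, ?_⟩
    rw [hasFiniteIntegral_iff_ofReal (Filter.Eventually.of_forall hg0), h]
    exact ENNReal.one_lt_top
  · rw [integral_eq_lintegral_of_nonneg_ae (Filter.Eventually.of_forall hg0)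
      hgm.aestronglyMeasurable, h]
    simp

/-- Almost surely `U ∈ (a, a + Δ]`: the density vanishes off `[a, b] ⊆ [a, a + Δ]`, and the left
endpoint is Lebesgue-null. -/
lemma ae_mem_Ioc {Ω : Type*} [MeasureSpace Ω] {U : Ω → ℝ} (hUm : Measurable U)
    {χ : ℝ → ℝ} (hχm : Measurable χ) (hUdens : Measure.map U (volume : Measure Ω)
      = (volume : Measure ℝ).withDensity (fun x => ENNReal.ofReal (χ x)))
    {a Δ : ℝ} (hsupp : ∀ x, χ x ≠ 0 → x ∈ Set.Icc a (a + Δ)) :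
    ∀ᵐ ω : Ω, U ω ∈ Set.Ioc a (a + Δ) := by
  refine ae_of_ae_map (p := fun x => x ∈ Set.Ioc a (a + Δ)) hUm.aemeasurable ?_
  have hm : MeasurableSet (Set.Ioc a (a + Δ))ᶜ := measurableSet_Ioc.compl
  rw [ae_iff]
  change (Measure.map U volume) (Set.Ioc a (a + Δ))ᶜ = 0
  rw [hUdens, withDensity_apply _ hm, lintegral_eq_zero_iff hχm.ennreal_ofReal,
    Filter.EventuallyEq, ae_restrict_iff' hm]
  filter_upwards [Measure.ae_ne volume a] with x hxa hx
  have : χ x = 0 := by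
    by_contra hne
    obtain ⟨h1, h2⟩ := hsupp x hne
    exact hx ⟨lt_of_le_of_ne h1 (Ne.symm hxa), h2⟩
  simp [this]

/-- On the `k`-th cell the density of `X + U` is the translate of `χ` by `x₀ + kΔ`, scaled by
`P(X = x₀ + kΔ)`. -/
lemma density_on_cell {Ω : Type*} [MeasureSpace Ω] [IsProbabilityMeasure (volume : Measure Ω)]
    {X U : Ω → ℝ} (hXm : Measurable X) (hUm : Measurable U)
    (hInd : ProbabilityTheory.IndepFun X U) {x₀ Δ : ℝ} (hΔ : 0 < Δ)
    (hlattice : ∀ ω, ∃ k : ℤ, X ω = x₀ + (k : ℝ) * Δ)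
    {χ : ℝ → ℝ} (hχm : Measurable χ) (hχ0 : ∀ x, 0 ≤ χ x)
    (hUdens : Measure.map U (volume : Measure Ω)
      = (volume : Measure ℝ).withDensity (fun x => ENNReal.ofReal (χ x)))
    {a : ℝ} (hsupp : ∀ x, χ x ≠ 0 → x ∈ Set.Icc a (a + Δ))
    {f : ℝ → ℝ} (hfm : Measurable f) (hf0 : ∀ x, 0 ≤ f x)
    (hfdens : Measure.map (fun ω => X ω + U ω) (volume : Measure Ω)
      = (volume : Measure ℝ).withDensity (fun x => ENNReal.ofReal (f x)))
    {p : ℤ → ℝ}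
    (hp : ∀ k : ℤ, p k = ((volume : Measure Ω) {ω | X ω = x₀ + (k : ℝ) * Δ}).toReal) (k : ℤ) :
    ∀ᵐ x ∂(volume.restrict (masseyCell x₀ Δ a k)), f x = p k * χ (x - (x₀ + (k : ℝ) * Δ)) := by
  set c : ℝ := x₀ + (k : ℝ) * Δ with hc
  have hp0 : 0 ≤ p k := by rw [hp]; positivity
  have hτ : Measurable fun x : ℝ => x - c := measurable_id.sub_const _
  have hχτ : Measurable fun x : ℝ => ENNReal.ofReal (χ (x - c)) := (hχm.comp hτ).ennreal_ofReal
  have hsm : Measurable fun ω => X ω + U ω := hXm.add hUm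
  have hUIoc := ae_mem_Ioc hUm hχm hUdens hsupp
  have key : (fun x => ENNReal.ofReal (f x))
      =ᵐ[volume.restrict (masseyCell x₀ Δ a k)] fun x => ENNReal.ofReal (p k * χ (x - c)) := by
    refine ae_eq_of_forall_setLIntegral_eq_of_sigmaFinite hfm.ennreal_ofReal
      ((hχm.comp hτ).const_mul _).ennreal_ofReal fun s hs _ => ?_
    rw [Measure.restrict_restrict hs]
    set A := s ∩ masseyCell x₀ Δ a k with hA
    have hAm : MeasurableSet A := hs.inter (measurableSet_masseyCell ..)
    have hshift : Measurable fun u : ℝ => u + c := measurable_id.add_const _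
    have hBm : MeasurableSet ((fun u : ℝ => u + c) ⁻¹' A) := hshift hAm
    -- up to a null event, `X + U ∈ A` forces `X = c`
    have hev : (fun ω => X ω + U ω) ⁻¹' A
        =ᵐ[volume] (X ⁻¹' {c} ∩ U ⁻¹' ((fun u : ℝ => u + c) ⁻¹' A) : Set Ω) := by
      filter_upwards [hUIoc] with ω hω
      apply propext
      change (X ω + U ω ∈ A) ↔ (X ω = c ∧ U ω + c ∈ A)
      constructor
      · intro h
        obtain ⟨j, hj⟩ := hlattice ω
        have hmem : X ω + U ω ∈ masseyCell x₀ Δ a j := by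
          change X ω + U ω - (x₀ + (j : ℝ) * Δ) ∈ Set.Ioc a (a + Δ)
          rwa [hj, add_sub_cancel_left]
        have hjk : j = k := masseyCell_unique hΔ hmem h.2
        subst hjk
        refine ⟨hj, ?_⟩
        rwa [hj, ← hc, add_comm] at h
      · rintro ⟨h1, h2⟩
        rwa [h1, add_comm]
    have hpk : volume (X ⁻¹' {c}) = ENNReal.ofReal (p k) := by
      rw [hp, ENNReal.ofReal_toReal (measure_ne_top _ _)]
      rfl
    calc ∫⁻ x in A, ENNReal.ofReal (f x)
        = volume ((fun ω => X ω + U ω) ⁻¹' A) := by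
          rw [← withDensity_apply _ hAm, ← hfdens, Measure.map_apply hsm hAm]
      _ = ENNReal.ofReal (p k) * ∫⁻ u in (fun u : ℝ => u + c) ⁻¹' A, ENNReal.ofReal (χ u) := by
          rw [measure_congr hev, hInd.measure_inter_preimage_eq_mul _ _
            (measurableSet_singleton c) hBm, hpk, ← Measure.map_apply hUm hBm, hUdens,
            withDensity_apply _ hBm]
      _ = ENNReal.ofReal (p k) * ∫⁻ x in A, ENNReal.ofReal (χ (x - c)) := by
          rw [← (measurePreserving_add_right volume c).setLIntegral_comp_preimage hAm hχτ]
          simp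
      _ = ∫⁻ x in A, ENNReal.ofReal (p k * χ (x - c)) := by
          rw [← lintegral_const_mul _ hχτ]
          simp_rw [ENNReal.ofReal_mul hp0]
  filter_upwards [key] with x hx
  exact (ENNReal.ofReal_eq_ofReal_iff (hf0 x) (mul_nonneg hp0 (hχ0 _))).1 hx

/-- Summing over the cells: `∫ G ∘ f = ∑ₖ ∫ G (p k * χ u) du` as soon as `f` is cellwise a multiple
of a translate of `χ`. -/
lemma hasSum_integral_comp {x₀ Δ a : ℝ} (hΔ : 0 < Δ) {χ f : ℝ → ℝ}
    (hsupp : ∀ x, χ x ≠ 0 → x ∈ Set.Icc a (a + Δ)) {p : ℤ → ℝ}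
    (hcell : ∀ k : ℤ, ∀ᵐ x ∂(volume.restrict (masseyCell x₀ Δ a k)),
      f x = p k * χ (x - (x₀ + (k : ℝ) * Δ)))
    (G : ℝ → ℝ) (hG0 : G 0 = 0) (hG : Integrable fun x => G (f x)) :
    HasSum (fun k => ∫ u, G (p k * χ u)) (∫ x, G (f x)) := by
  have h := hasSum_integral_iUnion (fun k => measurableSet_masseyCell x₀ Δ a k)
    (pairwise_disjoint_masseyCell a hΔ) (hG.integrableOn (s := ⋃ k, masseyCell x₀ Δ a k))
  rw [iUnion_masseyCell a hΔ, setIntegral_univ] at h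
  suffices hk : ∀ k, ∫ u, G (p k * χ u) = ∫ x in masseyCell x₀ Δ a k, G (f x) by
    simpa only [hk] using h
  intro k
  have h1 : ∫ x in masseyCell x₀ Δ a k, G (f x)
      = ∫ x in masseyCell x₀ Δ a k, G (p k * χ (x - (x₀ + (k : ℝ) * Δ))) :=
    integral_congr_ae ((hcell k).mono fun x hx => by simp only [hx])
  rw [h1, masseyCell,
    (measurePreserving_sub_right volume (x₀ + (k : ℝ) * Δ)).setIntegral_preimage_emb
    (measurableEmbedding_subRight _) (fun u => G (p k * χ u)), ← integral_Icc_eq_integral_Ioc,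
    setIntegral_eq_integral_of_forall_compl_eq_zero]
  intro u hu
  have : χ u = 0 := by
    by_contra hne
    exact hu (hsupp u hne)
  simp [this, hG0]

lemma diffRenyiEntropy_uniform {a Δ : ℝ} (hΔ : 0 < Δ) (α : ℝ) (hα : 0 < α) :
    diffRenyiEntropy α (Set.indicator (Set.Icc a (a + Δ)) (fun _ => 1 / Δ)) = Real.log Δ := by
  have hcomp : ∀ G : ℝ → ℝ, G 0 = 0 →
      ∫ x, G (Set.indicator (Set.Icc a (a + Δ)) (fun _ => 1 / Δ) x) = Δ * G (1 / Δ) := by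
    intro G hG0
    have : (fun x => G (Set.indicator (Set.Icc a (a + Δ)) (fun _ => 1 / Δ) x))
        = Set.indicator (Set.Icc a (a + Δ)) (fun _ => G (1 / Δ)) := by
      ext x
      by_cases hx : x ∈ Set.Icc a (a + Δ) <;> simp [hx, hG0]
    rw [this, integral_indicator measurableSet_Icc]
    simp [hΔ.le]
  unfold diffRenyiEntropy
  split_ifs with h
  · rw [hcomp (fun t => t * Real.log (1 / t)) (by simp)]
    field_simp
  · rw [hcomp (fun t => t ^ α) (Real.zero_rpow hα.ne'),
      Real.log_mul hΔ.ne' (by positivity), Real.log_rpow (by positivity), one_div Δ, Real.log_inv]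
    have : 1 - α ≠ 0 := sub_ne_zero.2 (Ne.symm h)
    field_simp
    ring

/-- Massey's equivalence: if `X` takes values in the lattice `{x₀ + kΔ : k ∈ ℤ}` and `U`
is an independent continuous random variable supported on an interval of length at most `Δ`,
then `H_α(X) = h_α(X + U) - h_α(U)` for every `α > 0` (whenever these quantities are defined);
in particular `H_α(X) = h_α(X + U) - ln Δ` when `U` is uniform on an interval of length `Δ`. -/
theorem massey_equivalence
    {Ω : Type*} [MeasureSpace Ω] [IsProbabilityMeasure (volume : Measure Ω)]
    (X U : Ω → ℝ) (hXm : Measurable X) (hUm : Measurable U)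
    (hInd : ProbabilityTheory.IndepFun X U)
    (x₀ Δ : ℝ) (hΔ : 0 < Δ)
    (hlattice : ∀ ω, ∃ k : ℤ, X ω = x₀ + (k : ℝ) * Δ)
    -- `U` has density `χ` whose support is contained in an interval of length at most `Δ`
    (χ : ℝ → ℝ) (hχm : Measurable χ) (hχ0 : ∀ x, 0 ≤ χ x)
    (hUdens : Measure.map U (volume : Measure Ω)
      = (volume : Measure ℝ).withDensity (fun x => ENNReal.ofReal (χ x)))
    (a b : ℝ) (hab : b - a ≤ Δ) (hsupp : ∀ x, χ x ≠ 0 → x ∈ Set.Icc a b)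
    -- `X + U` has density `f`
    (f : ℝ → ℝ) (hfm : Measurable f) (hf0 : ∀ x, 0 ≤ f x)
    (hfdens : Measure.map (fun ω => X ω + U ω) (volume : Measure Ω)
      = (volume : Measure ℝ).withDensity (fun x => ENNReal.ofReal (f x)))
    -- `p` is the probability mass function of `X`
    (p : ℤ → ℝ) (hp : ∀ k : ℤ, p k = ((volume : Measure Ω) {ω | X ω = x₀ + (k : ℝ) * Δ}).toReal)
    (α : ℝ) (hα : 0 < α)
    -- the entropies of order `α` are defined
    (hdef1 : α = 1 →
      Summable (fun k : ℤ => p k * Real.log (1 / p k)) ∧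
      Integrable (fun x => f x * Real.log (1 / f x)) ∧
      Integrable (fun x => χ x * Real.log (1 / χ x)))
    (hdefα : α ≠ 1 →
      Summable (fun k : ℤ => p k ^ α) ∧
      Integrable (fun x => f x ^ α) ∧
      Integrable (fun x => χ x ^ α)) :
    discreteRenyiEntropy α p = diffRenyiEntropy α f - diffRenyiEntropy α χ ∧
    (χ = Set.indicator (Set.Icc a (a + Δ)) (fun _ => 1 / Δ) →
      discreteRenyiEntropy α p = diffRenyiEntropy α f - Real.log Δ) := by
  have hsupp' : ∀ x, χ x ≠ 0 → x ∈ Set.Icc a (a + Δ) := fun x hx =>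
    ⟨(hsupp x hx).1, (hsupp x hx).2.trans (by linarith)⟩
  have hcell := density_on_cell hXm hUm hInd hΔ hlattice hχm hχ0 hUdens hsupp' hfm hf0 hfdens hp
  obtain ⟨hχint, hχone⟩ := integral_density_eq_one hUm hχm hχ0 hUdens
  obtain ⟨hfint, hfone⟩ := integral_density_eq_one (hXm.add hUm) hfm hf0 hfdens
  have hsum := fun G => hasSum_integral_comp hΔ hsupp' hcell G
  have hp0 : ∀ k, 0 ≤ p k := fun k => by rw [hp]; positivity
  have hpsum : HasSum p 1 := by
    have h := hsum (fun t => t) rfl hfint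
    simpa only [integral_const_mul, hχone, hfone, mul_one] using h
  have hmain : discreteRenyiEntropy α p = diffRenyiEntropy α f - diffRenyiEntropy α χ := by
    unfold discreteRenyiEntropy diffRenyiEntropy
    split_ifs with h1
    · obtain ⟨hps, hfi, hχi⟩ := hdef1 h1
      have hneg : ∀ t : ℝ, t * Real.log (1 / t) = Real.negMulLog t := fun t => by
        simp [Real.negMulLog]
      simp only [hneg] at hps hfi hχi ⊢
      have h := hsum Real.negMulLog Real.negMulLog_zero hfi
      have hterm : ∀ k, ∫ u, Real.negMulLog (p k * χ u)
          = Real.negMulLog (p k) + p k * ∫ u, Real.negMulLog (χ u) := fun k => by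
        simp only [Real.negMulLog_mul]
        rw [integral_add (hχint.mul_const _) (hχi.const_mul _), integral_mul_const,
          integral_const_mul, hχone, one_mul]
      simp only [hterm] at h
      have h' := hps.hasSum.add (hpsum.mul_right (∫ u, Real.negMulLog (χ u)))
      rw [one_mul] at h'
      linarith [h.unique h']
    · obtain ⟨hps, hfi, hχi⟩ := hdefα h1
      have h := hsum (fun t => t ^ α) (Real.zero_rpow hα.ne') hfi
      simp only [fun k u => Real.mul_rpow (z := α) (hp0 k) (hχ0 u), integral_const_mul] at h
      have hprod := h.unique (hps.hasSum.mul_right (∫ u, χ u ^ α))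
      have hpos1 : 0 < ∑' k, p k ^ α := by
        -- the masses add up to `1`, so one of them is positive
        obtain ⟨k, hk⟩ : ∃ k, p k ≠ 0 := by
          by_contra! hall
          have : p = 0 := funext hall
          rw [this] at hpsum
          exact zero_ne_one (hasSum_zero.unique hpsum)
        exact hps.tsum_pos (fun k => Real.rpow_nonneg (hp0 k) α) k
          (Real.rpow_pos_of_pos ((hp0 k).lt_of_ne' hk) α)
      have hpos2 : 0 < ∫ u, χ u ^ α := by
        have hsu : Function.support (fun u => χ u ^ α) = Function.support χ := by
          ext u
          simp [Real.rpow_eq_zero (hχ0 u) hα.ne']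
        rw [integral_pos_iff_support_of_nonneg (fun u => Real.rpow_nonneg (hχ0 u) α) hχi, hsu,
          ← integral_pos_iff_support_of_nonneg hχ0 hχint, hχone]
        exact one_pos
      rw [hprod, Real.log_mul hpos1.ne' hpos2.ne']
      ring
  refine ⟨hmain, fun hunif => ?_⟩
  rw [hmain, hunif, diffRenyiEntropy_uniform hΔ α hα]
end

section
/- Let ρ > 0 and let 𝒳 be a continuous real random variable with probability density f, finite differential entropy h(𝒳), and finite ρ-th absolute moment θ = E[|𝒳|^ρ]. Then h(𝒳) ≤ (1/ρ) ln(ρeθ) + ln(2·Γ(1 + 1/ρ)), with equality if and only if 𝒳 is a generalized Gaussian random variable, i.e., f(x) = e^{−|x|^ρ/(ρθ)} / (2·Γ(1+1/ρ)·(ρθ)^{1/ρ}) almost everywhere. If moreover 𝒳 ≥ 0 almost surely and θ = E[𝒳^ρ], then the same inequality holds with the factor 2 inside the logarithm removed: h(𝒳) ≤ (1/ρ) ln(ρeθ) + ln Γ(1 + 1/ρ). -/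
/-!
The proof is Gibbs' inequality against the generalized Gaussian density
`g x = exp (-b |x|^ρ) / Z`, with `b = 1 / (ρθ)` and `Z = ∫ exp (-b |x|^ρ)`. Pointwise,
`g - f - f log (g / f) ≥ 0` with equality only where `f = g` (this is `1 + log t ≤ t`), and since
`log g` is affine in `|x|^ρ`, the integral of the left side is `bθ + log Z - h = 1/ρ + log Z - h`.
This gives the bound, and the equality case because a nonnegative function with integral zero
vanishes almost everywhere (`gibbs_exp_abs_rpow`).

The inequality is proved for a general reference measure: Lebesgue measure on `ℝ` has
`Z = 2 Γ(1 + 1/ρ) (ρθ)^(1/ρ)`, while for nonnegative variables its restriction to `(0, ∞)` has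
half that normalizing constant, which removes the factor `2`.
-/

open MeasureTheory Real

/-- The integrand of the relative entropy `D(f ‖ g)`, made pointwise nonnegative by adding `g - f`.
At `a = 0` the convention `log (1 / 0) = 0` gives the expected `0 log (1 / 0) = 0`. -/
lemma gibbs_pointwise_nonneg {a g : ℝ} (ha : 0 ≤ a) (hg : 0 < g) :
    0 ≤ g - a - a * log g - a * log (1 / a) := by
  rcases ha.eq_or_lt with rfl | ha
  · simpa using hg.le
  · have h := log_le_sub_one_of_pos (div_pos hg ha)
    rw [log_div hg.ne' ha.ne'] at h
    have h2 := mul_le_mul_of_nonneg_left h ha.le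
    have h3 : a * (g / a - 1) = g - a := by field_simp
    rw [one_div, log_inv]
    linarith

lemma gibbs_pointwise_eq_zero_iff {a g : ℝ} (ha : 0 ≤ a) (hg : 0 < g) :
    g - a - a * log g - a * log (1 / a) = 0 ↔ a = g := by
  constructor
  · intro h0
    rcases ha.eq_or_lt with rfl | ha
    · simp at h0
      exact h0.symm
    · by_contra hne
      have hne1 : g / a ≠ 1 := by
        rw [Ne, div_eq_one_iff_eq ha.ne']
        exact fun h => hne h.symm
      have h := log_lt_sub_one_of_pos (div_pos hg ha) hne1
      rw [log_div hg.ne' ha.ne'] at h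
      have h2 := mul_lt_mul_of_pos_left h ha
      have h3 : a * (g / a - 1) = g - a := by field_simp
      rw [one_div, log_inv] at h0
      linarith
  · rintro rfl
    rw [one_div, log_inv]
    ring

/-- Gibbs' inequality, with its equality case, against the density `exp (-b |x|^ρ) / Z` relative to
an arbitrary measure `μ` on `ℝ`. -/
lemma gibbs_exp_abs_rpow (μ : Measure ℝ) {ρ b Z θ : ℝ} (hZ : 0 < Z)
    (hZi : ∫ x, exp (-b * |x| ^ ρ) ∂μ = Z) {f : ℝ → ℝ} (hf0 : ∀ x, 0 ≤ f x)
    (hf1 : ∫ x, f x ∂μ = 1) (hfi : Integrable f μ)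
    (hent : Integrable (fun x => f x * log (1 / f x)) μ)
    (hθ : ∫ x, |x| ^ ρ * f x ∂μ = θ) (hθi : Integrable (fun x => |x| ^ ρ * f x) μ) :
    (∫ x, f x * log (1 / f x) ∂μ) ≤ b * θ + log Z ∧
      ((∫ x, f x * log (1 / f x) ∂μ) = b * θ + log Z ↔
        f =ᵐ[μ] fun x => exp (-b * |x| ^ ρ) / Z) := by
  have hei : Integrable (fun x => exp (-b * |x| ^ ρ)) μ :=
    Integrable.of_integral_ne_zero (by rw [hZi]; exact hZ.ne')
  set g : ℝ → ℝ := fun x => exp (-b * |x| ^ ρ) / Z with hg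
  have hgpos : ∀ x, 0 < g x := fun x => by positivity
  have hgi : Integrable g μ := hei.div_const Z
  have hg1 : ∫ x, g x ∂μ = 1 := by
    rw [hg, integral_div, hZi, div_self hZ.ne']
  set k : ℝ → ℝ := fun x => g x - f x - f x * log (g x) - f x * log (1 / f x) with hk
  have hk_eq : k = fun x =>
      g x - f x + b * (|x| ^ ρ * f x) + log Z * f x - f x * log (1 / f x) := by
    funext x
    simp only [hk, hg]
    rw [log_div (exp_pos _).ne' hZ.ne', log_exp]
    ring
  have i1 : Integrable (fun x => g x - f x) μ := hgi.sub hfi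
  have i2 : Integrable (fun x => g x - f x + b * (|x| ^ ρ * f x)) μ := i1.add (hθi.const_mul b)
  have i3 : Integrable (fun x => g x - f x + b * (|x| ^ ρ * f x) + log Z * f x) μ :=
    i2.add (hfi.const_mul _)
  have hki : Integrable k μ := by
    rw [hk_eq]
    exact i3.sub hent
  have hkint : ∫ x, k x ∂μ = b * θ + log Z - ∫ x, f x * log (1 / f x) ∂μ := by
    rw [hk_eq, integral_sub i3 hent, integral_add i2 (hfi.const_mul _),
      integral_add i1 (hθi.const_mul b), integral_sub hgi hfi, integral_const_mul,
      integral_const_mul, hg1, hf1, hθ]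
    ring
  have hk0 : 0 ≤ k := fun x => gibbs_pointwise_nonneg (hf0 x) (hgpos x)
  constructor
  · have := integral_nonneg (μ := μ) hk0
    linarith
  · have h1 : (∫ x, f x * log (1 / f x) ∂μ) = b * θ + log Z ↔ ∫ x, k x ∂μ = 0 := by
      rw [hkint, sub_eq_zero, eq_comm]
    rw [h1, integral_eq_zero_iff_of_nonneg hk0 hki]
    exact Filter.eventually_congr
      (.of_forall fun x => gibbs_pointwise_eq_zero_iff (hf0 x) (hgpos x))

lemma integral_Ioi_exp_neg_abs_rpow {ρ c : ℝ} (hρ : 0 < ρ) (hc : 0 < c) :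
    ∫ x in Set.Ioi (0 : ℝ), exp (-(1 / c) * |x| ^ ρ) = Gamma (1 + 1 / ρ) * c ^ (1 / ρ) := by
  have h := integral_exp_neg_mul_rpow hρ (one_div_pos.2 hc)
  rw [setIntegral_congr_fun measurableSet_Ioi
    (g := fun x : ℝ => exp (-(1 / c) * x ^ ρ)) (fun x hx => by
      simp only [abs_of_pos (Set.mem_Ioi.1 hx)]), h, add_comm, mul_comm]
  congr 1
  rw [one_div c, inv_rpow hc.le, ← rpow_neg hc.le]
  congr 1
  ring

lemma integral_exp_neg_abs_rpow {ρ c : ℝ} (hρ : 0 < ρ) (hc : 0 < c) :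
    ∫ x : ℝ, exp (-(1 / c) * |x| ^ ρ) = 2 * Gamma (1 + 1 / ρ) * c ^ (1 / ρ) := by
  have h := integral_comp_abs (f := fun x : ℝ => exp (-(1 / c) * x ^ ρ))
  rw [h, mul_assoc, ← integral_Ioi_exp_neg_abs_rpow hρ hc]
  congr 1
  exact setIntegral_congr_fun measurableSet_Ioi fun x hx => by
    simp only [abs_of_pos (Set.mem_Ioi.1 hx)]

/-- The moment `θ` is positive, because a distribution with a density has no atom at `0`. -/
lemma moment_pos {ρ : ℝ} {f : ℝ → ℝ} (hf0 : ∀ x, 0 ≤ f x) (hf1 : ∫ x, f x = 1)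
    (hθi : Integrable (fun x => |x| ^ ρ * f x)) : 0 < ∫ x, |x| ^ ρ * f x := by
  have hnn : 0 ≤ fun x => |x| ^ ρ * f x := fun x =>
    mul_nonneg (rpow_nonneg (abs_nonneg x) ρ) (hf0 x)
  refine lt_of_le_of_ne (integral_nonneg hnn) fun h => ?_
  have h0 := (integral_eq_zero_iff_of_nonneg hnn hθi).1 h.symm
  have hne : ∀ᵐ x : ℝ, x ≠ 0 := by simp [ae_iff]
  have hf : f =ᵐ[volume] 0 := by
    filter_upwards [h0, hne] with x hx hx0
    exact (mul_eq_zero.1 hx).resolve_left (rpow_pos_of_pos (abs_pos.2 hx0) ρ).ne'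
  rw [integral_congr_ae hf] at hf1
  simp at hf1

lemma maxent_bound_eq {ρ θ C : ℝ} (hρ : 0 < ρ) (hθ : 0 < θ) (hC : 0 < C) :
    1 / (ρ * θ) * θ + log (C * (ρ * θ) ^ (1 / ρ)) =
      1 / ρ * log (ρ * exp 1 * θ) + log C := by
  have hc : 0 < ρ * θ := mul_pos hρ hθ
  rw [log_mul hC.ne' (rpow_pos_of_pos hc _).ne', log_rpow hc,
    show ρ * exp 1 * θ = ρ * θ * exp 1 by ring, log_mul hc.ne' (exp_pos 1).ne', log_exp]
  field_simp
  ring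

/-- Maximum-entropy bound for a fixed `ρ`-th absolute moment: if `𝒳` has density `f`,
finite differential entropy and `θ = E[|𝒳|^ρ] < ∞`, then
`h(𝒳) ≤ (1/ρ) ln(ρeθ) + ln(2Γ(1+1/ρ))`, with equality iff `𝒳` is a generalized Gaussian;
if moreover `𝒳 ≥ 0` a.s., the same inequality holds with the factor `2` removed. -/
theorem maxent_rho_moment
    (ρ : ℝ) (hρ : 0 < ρ)
    (f : ℝ → ℝ) (hfm : Measurable f) (hf0 : ∀ x, 0 ≤ f x)
    (hf1 : ∫ x, f x = 1) (hfi : Integrable f)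
    (hent : Integrable (fun x => f x * Real.log (1 / f x)))
    (θ : ℝ) (hθ : θ = ∫ x, |x| ^ ρ * f x) (hθi : Integrable (fun x => |x| ^ ρ * f x)) :
    ((∫ x, f x * Real.log (1 / f x)) ≤
        (1 / ρ) * Real.log (ρ * Real.exp 1 * θ) + Real.log (2 * Real.Gamma (1 + 1 / ρ)) ∧
      ((∫ x, f x * Real.log (1 / f x)) =
          (1 / ρ) * Real.log (ρ * Real.exp 1 * θ) + Real.log (2 * Real.Gamma (1 + 1 / ρ)) ↔
        f =ᵐ[volume] fun x =>
          Real.exp (-(|x| ^ ρ / (ρ * θ))) / (2 * Real.Gamma (1 + 1 / ρ) * (ρ * θ) ^ (1 / ρ)))) ∧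
    ((∀ᵐ x ∂(volume : Measure ℝ), x < 0 → f x = 0) →
      (∫ x, f x * Real.log (1 / f x)) ≤
        (1 / ρ) * Real.log (ρ * Real.exp 1 * θ) + Real.log (Real.Gamma (1 + 1 / ρ))) := by
  have hθp : 0 < θ := hθ ▸ moment_pos hf0 hf1 hθi
  have hc : 0 < ρ * θ := mul_pos hρ hθp
  have hG : 0 < Real.Gamma (1 + 1 / ρ) := Real.Gamma_pos_of_pos (by positivity)
  refine ⟨?_, fun hneg => ?_⟩
  · have h := gibbs_exp_abs_rpow volume (by positivity) (integral_exp_neg_abs_rpow hρ hc)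
      hf0 hf1 hfi hent hθ.symm hθi
    rw [maxent_bound_eq hρ hθp (by positivity)] at h
    have hexp : ∀ x : ℝ, -(1 / (ρ * θ)) * |x| ^ ρ = -(|x| ^ ρ / (ρ * θ)) := fun x => by ring
    simpa only [hexp] using h
    -- The density lives on `(0, ∞)`, so every integral may be restricted to that half-line.
  · have hne : ∀ᵐ x : ℝ, x ≠ 0 := by simp [ae_iff]
    have hf : ∀ᵐ x : ℝ, x ∉ Set.Ioi (0 : ℝ) → f x = 0 := by
      filter_upwards [hneg, hne] with x hx hx0 hxs
      exact hx (lt_of_le_of_ne (not_lt.1 hxs) hx0)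
    have e1 := setIntegral_eq_integral_of_ae_compl_eq_zero hf
    have e2 : ∫ x in Set.Ioi (0 : ℝ), |x| ^ ρ * f x = ∫ x, |x| ^ ρ * f x :=
      setIntegral_eq_integral_of_ae_compl_eq_zero
        (hf.mono fun x hx hxs => by rw [hx hxs, mul_zero])
    have e3 : ∫ x in Set.Ioi (0 : ℝ), f x * Real.log (1 / f x) =
        ∫ x, f x * Real.log (1 / f x) :=
      setIntegral_eq_integral_of_ae_compl_eq_zero
        (hf.mono fun x hx hxs => by rw [hx hxs, zero_mul])
    have h := (gibbs_exp_abs_rpow (volume.restrict (Set.Ioi 0)) (by positivity)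
      (integral_Ioi_exp_neg_abs_rpow hρ hc) hf0 (e1.trans hf1) hfi.integrableOn
      hent.integrableOn (e2.trans hθ.symm) hθi.integrableOn).1
    rwa [maxent_bound_eq hρ hθp hG, e3] at h
end

section
/- Let 𝒳 be a continuous real random variable with probability density f, finite differential Rényi entropy h_α(𝒳), and finite variance σ² > 0. If 1/3 < α < 1, then h_α(𝒳) ≤ (1/2) ln( (3α−1)/(1−α) · πσ² ) + (1/(1−α)) ln( 2α/(3α−1) ) + ln( Γ(1/(1−α) − 1/2) / Γ(1/(1−α)) ). If α > 1, then h_α(𝒳) ≤ (1/2) ln( (3α−1)/(α−1) · πσ² ) + (1/(α−1)) ln( (3α−1)/(2α) ) + ln( Γ(α/(α−1)) / Γ(α/(α−1) + 1/2) ). In either case equality holds if and only if 𝒳 is an α-Gaussian random variable, i.e., f(x) is proportional to (1 + β((x−μ)/σ)²)^{1/(α−1)} restricted to where this is nonnegative, with β = (1−α)/(3α−1) and μ the mean of 𝒳. -/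
open MeasureTheory Real

/-!
Write `W x = max (1 + β ((x - μ) / σ)²) 0` with `β = (1 - α) / (3 α - 1)`, `p = 1 / (α - 1)`,
`I = ∫ W ^ p` and `K = 1 + β`. The candidate maximizer is the density `g = I⁻¹ W ^ p`, for which
`g ^ (α - 1) = I ^ (1 - α) W` is, on the support of `g`, a quadratic polynomial in `x`.

The map `t ↦ t ^ α` lies strictly on one side of its tangent line at `g x`, below for `α < 1` and
above for `α > 1` (Bernoulli's inequality: `rpow_lt_tangent`, `tangent_lt_rpow`). Integrating the
tangent inequality `f ^ α ≶ g ^ α + α g ^ (α - 1) (f - g)`, the linear term has the favourable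
sign: for `α < 1`, `∫ f W` depends on the mass and variance of `f` only and equals `K`, and for
`α > 1` truncation at zero can only increase it, so that `∫ f W ≥ K`; on the other side
`∫ W ^ (p + 1) = K I`. Hence `∫ f ^ α ≶ K I ^ (1 - α)`, and equality forces `f = g` almost
everywhere because the tangent inequality is strict elsewhere. This is `renyi_core`.

The constants come from two integrals: `∫ (1 + u²) ^ (-s)`, evaluated by inserting the Gamma
integral for `(1 + u²) ^ (-s)` and exchanging the order of integration, and
`∫ (1 - u²)₊ ^ b`, which is a Beta integral combined with the duplication formula. The identity
`∫ W ^ (p + 1) = K I` is then the functional equation of `Γ`.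
-/

/-! ### Strict tangent line inequalities for powers -/

theorem rpow_lt_tangent {α a b : ℝ} (h0 : 0 < α) (h1 : α < 1) (ha : 0 ≤ a) (hb : 0 < b)
    (hab : a ≠ b) : a ^ α < b ^ α + α * b ^ (α - 1) * (a - b) := by
  have hs : -1 ≤ a / b - 1 := by linarith [div_nonneg ha hb.le]
  have hs' : a / b - 1 ≠ 0 := by
    rw [sub_ne_zero]; intro h; exact hab ((div_eq_one_iff_eq hb.ne').1 h)
  have h := mul_lt_mul_of_pos_left (rpow_one_add_lt_one_add_mul_self hs hs' h0 h1)
    (rpow_pos_of_pos hb α)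
  rw [← mul_rpow hb.le (by linarith), show b * (1 + (a / b - 1)) = a by field_simp; ring] at h
  rw [rpow_sub_one hb.ne']
  convert! h using 1
  field_simp

theorem tangent_lt_rpow {α a b : ℝ} (h1 : 1 < α) (ha : 0 ≤ a) (hb : 0 ≤ b)
    (hab : a ≠ b) : b ^ α + α * b ^ (α - 1) * (a - b) < a ^ α := by
  rcases hb.eq_or_lt with rfl | hb
  · rw [zero_rpow (by linarith), zero_rpow (by linarith)]
    simpa using rpow_pos_of_pos (lt_of_le_of_ne ha hab.symm) α
  have hs : -1 ≤ a / b - 1 := by linarith [div_nonneg ha hb.le]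
  have hs' : a / b - 1 ≠ 0 := by
    rw [sub_ne_zero]; intro h; exact hab ((div_eq_one_iff_eq hb.ne').1 h)
  have h := mul_lt_mul_of_pos_left (one_add_mul_self_lt_rpow_one_add hs hs' h1)
    (rpow_pos_of_pos hb α)
  rw [← mul_rpow hb.le (by linarith), show b * (1 + (a / b - 1)) = a by field_simp; ring] at h
  rw [rpow_sub_one hb.ne']
  convert! h using 1
  field_simp

/-! ### The two normalizing integrals -/

theorem integrable_one_add_sq_rpow {s : ℝ} (hs : 1 / 2 < s) :
    Integrable (fun u : ℝ => (1 + u ^ 2) ^ (-s)) := by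
  have := integrable_rpow_neg_one_add_norm_sq (E := ℝ) (μ := volume) (r := 2 * s)
    (by simp; linarith)
  simpa [neg_div] using this

theorem integral_one_add_sq_rpow {s : ℝ} (hs : 1 / 2 < s) :
    ∫ u : ℝ, (1 + u ^ 2) ^ (-s) = √π * (Gamma (s - 1 / 2) / Gamma s) := by
  have hs0 : 0 < s := by linarith
  have hG := Gamma_pos_of_pos hs0
  -- Integrating `F` over `t > 0` gives `Γ(s) (1 + u²) ^ (-s)`; over `u` it is a Gaussian integral.
  let F : ℝ → ℝ → ℝ := fun t u => t ^ (s - 1) * exp (-t) * exp (-t * u ^ 2)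
  have hin : ∀ t ∈ Set.Ioi (0 : ℝ),
      ∫ u, F t u = √π * (exp (-t) * t ^ (s - 1 / 2 - 1)) := by
    intro t ht
    have ht : 0 < t := ht
    simp only [F]
    rw [integral_const_mul, integral_gaussian, sqrt_div pi_pos.le, sqrt_eq_rpow t,
      show s - 1 / 2 - 1 = (s - 1) - 1 / 2 by ring, rpow_sub ht (s - 1) (1 / 2)]
    ring
  have hint : Integrable (Function.uncurry F) ((volume.restrict (Set.Ioi 0)).prod volume) := by
    rw [integrable_prod_iff]
    · constructor
      · refine (ae_restrict_mem measurableSet_Ioi).mono fun t ht => ?_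
        exact (integrable_exp_neg_mul_sq ht).const_mul (t ^ (s - 1) * exp (-t))
      · have : IntegrableOn (fun t => √π * (exp (-t) * t ^ (s - 1 / 2 - 1))) (Set.Ioi 0) :=
          (GammaIntegral_convergent (by linarith)).const_mul _
        refine this.congr_fun (fun t ht => ?_) measurableSet_Ioi
        dsimp only
        rw [← hin t ht]
        refine integral_congr_ae (.of_forall fun u => ?_)
        have ht : 0 < t := ht
        dsimp only [F, Function.uncurry]
        rw [norm_of_nonneg (by positivity)]
    · refine Measurable.aestronglyMeasurable ?_
      dsimp only [F, Function.uncurry]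
      fun_prop
  have hsw := integral_integral_swap hint
  rw [setIntegral_congr_fun measurableSet_Ioi hin, integral_const_mul,
    ← Gamma_eq_integral (by linarith)] at hsw
  rw [mul_div_assoc', hsw, eq_div_iff hG.ne', ← integral_mul_const]
  refine integral_congr_ae (.of_forall fun u => ?_)
  have hu : 0 < 1 + u ^ 2 := by positivity
  have := integral_rpow_mul_exp_neg_mul_Ioi hs0 hu
  dsimp only [F]
  rw [rpow_neg hu.le, ← inv_rpow hu.le, ← one_div, ← this]
  refine integral_congr_ae (.of_forall fun t => ?_)
  dsimp only
  rw [mul_assoc, ← exp_add]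
  congr 2; ring

theorem integral_beta_diag {b : ℝ} (hb : 0 < b) :
    ∫ v in (0 : ℝ)..1, v ^ b * (1 - v) ^ b = Gamma (b + 1) ^ 2 / Gamma (2 * (b + 1)) := by
  have h := ProbabilityTheory.beta_eq_betaIntegralReal (b + 1) (b + 1) (by linarith) (by linarith)
  rw [ProbabilityTheory.beta, Complex.betaIntegral] at h
  rw [pow_two, two_mul, h, ← Complex.ofReal_re (∫ v in (0 : ℝ)..1, v ^ b * (1 - v) ^ b),
    ← intervalIntegral.integral_ofReal]
  congr 1
  refine intervalIntegral.integral_congr fun v hv => ?_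
  rw [Set.uIcc_of_le zero_le_one] at hv
  push_cast
  rw [add_sub_cancel_right, Complex.ofReal_cpow hv.1, Complex.ofReal_cpow (by linarith [hv.2])]
  push_cast
  rfl

theorem max_one_sub_sq_rpow {b : ℝ} (hb : 0 < b) :
    (fun u : ℝ => (max (1 - u ^ 2) 0) ^ b)
      = (Set.Ioc (-1 : ℝ) 1).indicator (fun u => (1 - u ^ 2) ^ b) := by
  ext u
  by_cases hu : u ∈ Set.Ioc (-1 : ℝ) 1
  · rw [Set.indicator_of_mem hu, max_eq_left]
    nlinarith [hu.1, hu.2]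
  · rw [Set.indicator_of_notMem hu, max_eq_right, zero_rpow hb.ne']
    rw [Set.mem_Ioc, not_and_or, not_lt, not_le] at hu
    rcases hu with hu | hu <;> nlinarith

theorem integrable_max_one_sub_sq_rpow {b : ℝ} (hb : 0 < b) :
    Integrable (fun u : ℝ => (max (1 - u ^ 2) 0) ^ b) := by
  rw [max_one_sub_sq_rpow hb, integrable_indicator_iff measurableSet_Ioc]
  refine (ContinuousOn.integrableOn_Icc (Continuous.continuousOn ?_)).mono_set
    Set.Ioc_subset_Icc_self
  exact (by fun_prop : Continuous fun u : ℝ => 1 - u ^ 2).rpow_const fun _ => Or.inr hb.le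

theorem integral_max_one_sub_sq_rpow {b : ℝ} (hb : 0 < b) :
    ∫ u : ℝ, (max (1 - u ^ 2) 0) ^ b = √π * (Gamma (b + 1) / Gamma (b + 1 + 1 / 2)) := by
  rw [max_one_sub_sq_rpow hb, integral_indicator measurableSet_Ioc,
    ← intervalIntegral.integral_of_le (by norm_num)]
  -- The substitution `u = 2 v - 1` turns `1 - u²` into `4 v (1 - v)`.
  have h := intervalIntegral.integral_comp_mul_sub (a := 0) (b := 1)
    (fun u : ℝ => (1 - u ^ 2) ^ b) (c := 2) two_ne_zero 1
  norm_num at h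
  have h2 : ∫ v in (0 : ℝ)..1, (1 - (2 * v - 1) ^ 2) ^ b
      = ∫ v in (0 : ℝ)..1, 4 ^ b * (v ^ b * (1 - v) ^ b) := by
    refine intervalIntegral.integral_congr fun v hv => ?_
    rw [Set.uIcc_of_le zero_le_one] at hv
    rw [← mul_rpow hv.1 (by linarith [hv.2]),
      ← mul_rpow (by norm_num) (mul_nonneg hv.1 (by linarith [hv.2]))]
    congr 1; ring
  rw [h2, intervalIntegral.integral_const_mul, integral_beta_diag hb] at h
  have hd := Gamma_mul_Gamma_add_half (b + 1)
  have g1 := Gamma_pos_of_pos (show 0 < b + 1 by linarith)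
  have g2 := Gamma_pos_of_pos (show 0 < b + 1 + 1 / 2 by linarith)
  have g3 := Gamma_pos_of_pos (show 0 < 2 * (b + 1) by linarith)
  have h4 : (4 : ℝ) ^ b * 2 * 2 ^ (1 - 2 * (b + 1)) = 1 := by
    rw [show (4 : ℝ) = 2 ^ (2 : ℝ) by norm_num, ← rpow_mul (by norm_num),
      show (2 : ℝ) ^ (2 * b) * 2 = 2 ^ (2 * b + 1) by rw [rpow_add_one two_ne_zero],
      ← rpow_add two_pos]
    rw [show 2 * b + 1 + (1 - 2 * (b + 1)) = (0 : ℝ) by ring, rpow_zero]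
  have h5 : ∫ u in (-1 : ℝ)..1, (1 - u ^ 2) ^ b
      = 2 * (4 ^ b * (Gamma (b + 1) ^ 2 / Gamma (2 * (b + 1)))) := by linarith
  rw [h5]
  rw [mul_div_assoc' (√π), eq_div_iff g2.ne',
    show 2 * ((4 : ℝ) ^ b * (Gamma (b + 1) ^ 2 / Gamma (2 * (b + 1)))) * Gamma (b + 1 + 1 / 2)
      = 2 * (4 : ℝ) ^ b * Gamma (b + 1) ^ 2 * Gamma (b + 1 + 1 / 2) / Gamma (2 * (b + 1)) by ring,
    div_eq_iff g3.ne']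
  calc 2 * (4:ℝ) ^ b * Gamma (b + 1) ^ 2 * Gamma (b + 1 + 1 / 2)
      = 2 * 4 ^ b * Gamma (b + 1) * (Gamma (b + 1) * Gamma (b + 1 + 1 / 2)) := by ring
    _ = (4 ^ b * 2 * 2 ^ (1 - 2 * (b + 1))) * Gamma (b + 1) * Gamma (2 * (b + 1)) * √π := by
      rw [hd]; ring
    _ = _ := by rw [h4]; ring

theorem integral_comp_affine (F : ℝ → ℝ) {k : ℝ} (hk : 0 < k) (μ : ℝ) :
    ∫ x, F (k * (x - μ)) = k⁻¹ * ∫ u, F u := by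
  rw [integral_sub_right_eq_self (fun x => F (k * x)) μ, Measure.integral_comp_mul_left,
    abs_of_pos (inv_pos.2 hk), smul_eq_mul]

theorem integrable_comp_affine {F : ℝ → ℝ} (hF : Integrable F) {k : ℝ} (hk : 0 < k) (μ : ℝ) :
    Integrable fun x => F (k * (x - μ)) :=
  (hF.comp_mul_left' hk.ne').comp_sub_right μ

/-! ### The entropy bound for a general weight -/

/-- The entropy bound, with its equality case, for a weight `W` normalized by `∫ W ^ p = I` and
`∫ W ^ (p + 1) = K I`, where `p = 1 / (α - 1)`. The sign `s` treats the concave case `α < 1` and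
the convex case `α > 1` together; `htan` is the strict tangent line inequality for `t ↦ t ^ α`
at the values of multiples of `W ^ p`. -/
theorem renyi_core {α : ℝ} (hα0 : 0 < α) (hα1 : α ≠ 1) {s : ℝ}
    (hs : (s = 1 ∧ α < 1) ∨ (s = -1 ∧ 1 < α))
    {f W : ℝ → ℝ} (hf0 : ∀ x, 0 ≤ f x) (hf1 : ∫ x, f x = 1)
    (hfα : Integrable (fun x => f x ^ α)) (hW : ∀ x, 0 ≤ W x)
    (htan : ∀ x a c, 0 ≤ a → 0 < c → a ≠ c * W x ^ (1 / (α - 1)) →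
      s * a ^ α < s * ((c * W x ^ (1 / (α - 1))) ^ α
        + α * (c * W x ^ (1 / (α - 1))) ^ (α - 1) * (a - c * W x ^ (1 / (α - 1)))))
    {I K : ℝ} (hI : 0 < I) (hK : 0 < K)
    (hWI' : ∫ x, W x ^ (1 / (α - 1)) = I)
    (hWK : Integrable fun x => W x * W x ^ (1 / (α - 1)))
    (hWK' : ∫ x, W x * W x ^ (1 / (α - 1)) = K * I)
    (hfW : Integrable fun x => f x * W x) (hfW' : s * ∫ x, f x * W x ≤ s * K) :
    (1 / (1 - α)) * log (∫ x, f x ^ α) ≤ log I + 1 / (1 - α) * log K ∧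
    ((1 / (1 - α)) * log (∫ x, f x ^ α) = log I + 1 / (1 - α) * log K ↔
      ∃ c > 0, f =ᵐ[volume] fun x => c * W x ^ (1 / (α - 1))) := by
  set p := 1 / (α - 1) with hp
  have hα1' : α - 1 ≠ 0 := sub_ne_zero.2 hα1
  have hα1'' : 1 - α ≠ 0 := sub_ne_zero.2 hα1.symm
  have hpα : p * α = 1 + p := by rw [hp]; field_simp; ring
  have hpα' : p * (α - 1) = 1 := by rw [hp]; field_simp
  have hWp : ∀ x, 0 ≤ W x ^ p := fun x => rpow_nonneg (hW x) _
  have hgα : ∀ c x, 0 < c → (c * W x ^ p) ^ α = c ^ α * (W x * W x ^ p) := by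
    intro c x hc
    rw [mul_rpow hc.le (hWp x), ← rpow_mul (hW x)]
    congr 1
    -- Where `W x = 0`, both sides vanish, since `p * α ≠ 0`.
    rcases (hW x).eq_or_lt with h | h
    · rw [← h, zero_mul, zero_rpow (by rw [hp]; positivity)]
    · rw [hpα, rpow_add h, rpow_one]
  have hgα1 : ∀ c x, 0 < c → (c * W x ^ p) ^ (α - 1) = c ^ (α - 1) * W x := by
    intro c x hc
    rw [mul_rpow hc.le (hWp x), ← rpow_mul (hW x), hpα', rpow_one]
  obtain ⟨c, hc⟩ : ∃ c, c = I⁻¹ := ⟨_, rfl⟩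
  have hc0 : 0 < c := hc ▸ inv_pos.2 hI
  have hcI : c * I = 1 := by rw [hc]; exact inv_mul_cancel₀ hI.ne'
  have hcα : c ^ α = c ^ (α - 1) * c := by rw [rpow_sub_one hc0.ne']; field_simp
  obtain ⟨B, hB⟩ : ∃ B, B = c ^ (α - 1) * K := ⟨_, rfl⟩
  have hB0 : 0 < B := hB ▸ mul_pos (rpow_pos_of_pos hc0 _) hK
  have hlogB : 1 / (1 - α) * log B = log I + 1 / (1 - α) * log K := by
    rw [hB, log_mul (rpow_pos_of_pos hc0 _).ne' hK.ne', log_rpow hc0, hc, log_inv]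
    field_simp
    ring
  -- `D` is the gap in the tangent line inequality at `g x = c * W x ^ p`.
  let D : ℝ → ℝ := fun x =>
    s * (c ^ α * (W x * W x ^ p) + α * c ^ (α - 1) * (f x * W x - c * (W x * W x ^ p)) - f x ^ α)
  have hDpos : ∀ x, f x ≠ c * W x ^ p → 0 < D x := by
    intro x hx
    have := htan x (f x) c (hf0 x) hc0 hx
    rw [hgα c x hc0, hgα1 c x hc0] at this
    simp only [D]
    linarith
  have hDzero : ∀ x, f x = c * W x ^ p → D x = 0 := by
    intro x hx
    simp only [D]
    rw [show f x ^ α = _ from hx ▸ hgα c x hc0, hx]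
    ring
  have hD0 : ∀ x, 0 ≤ D x := fun x => by
    by_cases h : f x = c * W x ^ p
    · exact (hDzero x h).ge
    · exact (hDpos x h).le
  have hDi : Integrable D :=
    (((hWK.const_mul _).add ((hfW.sub (hWK.const_mul _)).const_mul _)).sub hfα).const_mul _
  have hDint : ∫ x, D x = s * (B + α * c ^ (α - 1) * ((∫ x, f x * W x) - K) - ∫ x, f x ^ α) := by
    simp only [D]
    rw [integral_const_mul, integral_sub _ hfα, integral_add (hWK.const_mul _),
      integral_const_mul, integral_const_mul, integral_sub hfW (hWK.const_mul _),
      integral_const_mul, hWK', hcα, hB]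
    · rw [show c ^ (α - 1) * c * (K * I) = c ^ (α - 1) * K * (c * I) by ring,
        show c * (K * I) = K * (c * I) by ring, hcI]
      ring
    · exact (hfW.sub (hWK.const_mul _)).const_mul _
    · exact (hWK.const_mul _).add ((hfW.sub (hWK.const_mul _)).const_mul _)
  have hDle : ∫ x, D x ≤ s * (B - ∫ x, f x ^ α) := by
    have h1 : α * c ^ (α - 1) * (s * ∫ x, f x * W x) ≤ α * c ^ (α - 1) * (s * K) :=
      mul_le_mul_of_nonneg_left hfW' (mul_nonneg hα0.le (rpow_nonneg hc0.le _))
    rw [hDint]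
    linarith
  have hDint0 : 0 ≤ ∫ x, D x := integral_nonneg hD0
  have hfpos : 0 < ∫ x, f x ^ α := by
    refine lt_of_le_of_ne (integral_nonneg fun x => rpow_nonneg (hf0 x) _) fun h => ?_
    have h0 := (integral_eq_zero_iff_of_nonneg (fun x => rpow_nonneg (hf0 x) _) hfα).1 h.symm
    have : ∫ x, f x = 0 := by
      refine integral_eq_zero_of_ae (h0.mono fun x hx => ?_)
      exact (rpow_eq_zero (hf0 x) hα0.ne').1 hx
    linarith
  have heq : (∫ x, f x ^ α) = B ↔ ∃ c > 0, f =ᵐ[volume] fun x => c * W x ^ p := by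
    constructor
    · intro h
      rw [h, sub_self, mul_zero] at hDle
      have h0 := (integral_eq_zero_iff_of_nonneg hD0 hDi).1 (le_antisymm hDle hDint0)
      refine ⟨c, hc0, h0.mono fun x hx => ?_⟩
      by_contra hne
      exact (hDpos x hne).ne' hx
    · rintro ⟨d, hd0, hd⟩
      have h1 : d * I = 1 := by
        rw [← hf1, integral_congr_ae hd, integral_const_mul, hWI']
      have hdc : d = c := mul_right_cancel₀ hI.ne' (h1.trans hcI.symm)
      subst hdc
      have h2 : (fun x => f x ^ α) =ᵐ[volume] fun x => d ^ α * (W x * W x ^ p) :=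
        hd.mono fun x hx => by
          dsimp only at hx ⊢
          rw [hx, hgα d x hd0]
      rw [integral_congr_ae h2, integral_const_mul, hWK', hcα, hB]
      linear_combination d ^ (α - 1) * K * hcI
  rw [← hlogB, ← heq]
  constructor
  · rcases hs with ⟨rfl, h⟩ | ⟨rfl, h⟩
    · exact mul_le_mul_of_nonneg_left (log_le_log hfpos (by linarith))
        (one_div_nonneg.2 (by linarith))
    · exact mul_le_mul_of_nonpos_left (log_le_log hB0 (by linarith))
        (one_div_nonpos.2 (by linarith))
  · rw [mul_right_inj' (one_div_ne_zero hα1'')]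
    exact ⟨fun h => log_injOn_pos hfpos hB0 h, fun h => by rw [h]⟩

/-! ### The α-Gaussian weights -/

theorem log_scale {β σ2 R : ℝ} (hβ : 0 < β) (hσ : 0 < σ2) (hR : 0 < R) :
    log ((√(β / σ2))⁻¹ * (√π * R)) = 1 / 2 * log (β⁻¹ * (π * σ2)) + log R := by
  rw [← mul_assoc, ← sqrt_inv, ← sqrt_mul (by positivity), log_mul (by positivity) hR.ne',
    log_sqrt (by positivity), show (β / σ2)⁻¹ * π = β⁻¹ * (π * σ2) by field_simp]
  ring

/-- Maximum Rényi-entropy bound under a variance constraint: if `𝒳` has density `f`,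
mean `μ` and finite variance `σ² > 0`, then for `1/3 < α < 1` or `α > 1` the stated bounds
on `h_α(𝒳)` hold, with equality iff `𝒳` is α-Gaussian. -/
theorem maxent_renyi_variance
    (α : ℝ) (hα0 : 0 < α) (hα1 : α ≠ 1)
    (f : ℝ → ℝ) (hfm : Measurable f) (hf0 : ∀ x, 0 ≤ f x)
    (hf1 : ∫ x, f x = 1) (hfi : Integrable f)
    (hfα : Integrable (fun x => f x ^ α))
    (μ : ℝ) (hμ : μ = ∫ x, x * f x) (hμi : Integrable (fun x => x * f x))
    (σ2 : ℝ) (hσ2 : σ2 = ∫ x, (x - μ) ^ 2 * f x)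
    (hσ2i : Integrable (fun x => (x - μ) ^ 2 * f x)) (hσ2pos : 0 < σ2) :
    ((1 / 3 < α ∧ α < 1) →
      ((1 / (1 - α)) * Real.log (∫ x, f x ^ α) ≤
          (1 / 2) * Real.log ((3 * α - 1) / (1 - α) * (π * σ2))
            + (1 / (1 - α)) * Real.log (2 * α / (3 * α - 1))
            + Real.log (Real.Gamma (1 / (1 - α) - 1 / 2) / Real.Gamma (1 / (1 - α))) ∧
        ((1 / (1 - α)) * Real.log (∫ x, f x ^ α) =
            (1 / 2) * Real.log ((3 * α - 1) / (1 - α) * (π * σ2))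
              + (1 / (1 - α)) * Real.log (2 * α / (3 * α - 1))
              + Real.log (Real.Gamma (1 / (1 - α) - 1 / 2) / Real.Gamma (1 / (1 - α))) ↔
          ∃ c > 0, f =ᵐ[volume] fun x =>
            c * (max (1 + (1 - α) / (3 * α - 1) * ((x - μ) / Real.sqrt σ2) ^ 2) 0)
              ^ (1 / (α - 1))))) ∧
    (1 < α →
      ((1 / (1 - α)) * Real.log (∫ x, f x ^ α) ≤
          (1 / 2) * Real.log ((3 * α - 1) / (α - 1) * (π * σ2))
            + (1 / (α - 1)) * Real.log ((3 * α - 1) / (2 * α))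
            + Real.log (Real.Gamma (α / (α - 1)) / Real.Gamma (α / (α - 1) + 1 / 2)) ∧
        ((1 / (1 - α)) * Real.log (∫ x, f x ^ α) =
            (1 / 2) * Real.log ((3 * α - 1) / (α - 1) * (π * σ2))
              + (1 / (α - 1)) * Real.log ((3 * α - 1) / (2 * α))
              + Real.log (Real.Gamma (α / (α - 1)) / Real.Gamma (α / (α - 1) + 1 / 2)) ↔
          ∃ c > 0, f =ᵐ[volume] fun x =>
            c * (max (1 + (1 - α) / (3 * α - 1) * ((x - μ) / Real.sqrt σ2) ^ 2) 0)
              ^ (1 / (α - 1))))) := by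
  have hσs : √σ2 ^ 2 = σ2 := sq_sqrt hσ2pos.le
  have hfwi : ∀ β : ℝ, Integrable fun x => f x * (1 + β * ((x - μ) / √σ2) ^ 2) := by
    intro β
    refine (hfi.add (hσ2i.const_mul (β / σ2))).congr (.of_forall fun x => ?_)
    simp only [Pi.add_apply, div_pow, hσs]
    ring
  have hfw : ∀ β : ℝ, ∫ x, f x * (1 + β * ((x - μ) / √σ2) ^ 2) = 1 + β := by
    intro β
    have h : ∀ x, f x * (1 + β * ((x - μ) / √σ2) ^ 2)
        = f x + β / σ2 * ((x - μ) ^ 2 * f x) := fun x => by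
      simp only [div_pow, hσs]
      ring
    simp only [h]
    rw [integral_add hfi (hσ2i.const_mul _), integral_const_mul, hf1, ← hσ2,
      div_mul_cancel₀ _ hσ2pos.ne']
  have hsq : ∀ β : ℝ, 0 < β → ∀ x,
      β * ((x - μ) / √σ2) ^ 2 = (√(β / σ2) * (x - μ)) ^ 2 := by
    intro β hβ x
    rw [mul_pow, div_pow, hσs, sq_sqrt (by positivity)]
    ring
  refine ⟨fun ⟨h3, h1⟩ => ?_, fun h1 => ?_⟩
  · have h3' : 0 < 3 * α - 1 := by linarith
    have h3n : α * 3 - 1 ≠ 0 := by linarith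
    have h1' : 0 < 1 - α := by linarith
    obtain ⟨β, hβ⟩ : ∃ β, β = (1 - α) / (3 * α - 1) := ⟨_, rfl⟩
    obtain ⟨a, ha⟩ : ∃ a, a = 1 / (1 - α) := ⟨_, rfl⟩
    have hβ0 : 0 < β := hβ ▸ div_pos h1' h3'
    have ha3 : 3 / 2 < a := by rw [ha, lt_div_iff₀ h1']; linarith
    have hp : 1 / (α - 1) = -a := by
      rw [ha, ← one_div_neg_eq_neg_one_div, neg_sub]
    have hK : 1 + β = 2 * α / (3 * α - 1) := by rw [hβ]; field_simp; ring
    have hk : 0 < √(β / σ2) := by positivity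
    have g1 := Gamma_pos_of_pos (show 0 < a - 1 / 2 by linarith)
    have g2 := Gamma_pos_of_pos (show 0 < a by linarith)
    have g3 := Gamma_pos_of_pos (show 0 < a - 1 - 1 / 2 by linarith)
    have g4 := Gamma_pos_of_pos (show 0 < a - 1 by linarith)
    have hWeq : ∀ x, max (1 + β * ((x - μ) / √σ2) ^ 2) 0
        = 1 + (√(β / σ2) * (x - μ)) ^ 2 := fun x => by
      rw [hsq β hβ0, max_eq_left (by positivity)]
    have hWW : ∀ u : ℝ, (1 + u ^ 2) * (1 + u ^ 2) ^ (-a) = (1 + u ^ 2) ^ (-(a - 1)) := by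
      intro u
      rw [show -(a - 1) = 1 + -a by ring, rpow_add (by positivity), rpow_one]
    have key := renyi_core hα0 hα1 (s := 1) (Or.inl ⟨rfl, h1⟩)
      (W := fun x => max (1 + β * ((x - μ) / √σ2) ^ 2) 0)
      (I := (√(β / σ2))⁻¹ * (√π * (Gamma (a - 1 / 2) / Gamma a))) (K := 1 + β)
      hf0 hf1 hfα (fun x => le_max_right _ _)
      (fun x y c hy hc hne => by
        rw [one_mul, one_mul]
        refine rpow_lt_tangent hα0 h1 hy (mul_pos hc (rpow_pos_of_pos ?_ _)) hne
        rw [hWeq]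
        positivity)
      (by positivity) (by positivity)
      (by
        simp only [hWeq, hp]
        rw [integral_comp_affine (fun u => (1 + u ^ 2) ^ (-a)) hk,
          integral_one_add_sq_rpow (by linarith)])
      (by
        simp only [hWeq, hp, hWW]
        exact integrable_comp_affine (integrable_one_add_sq_rpow (by linarith)) hk μ)
      (by
        simp only [hWeq, hp, hWW]
        rw [integral_comp_affine (fun u => (1 + u ^ 2) ^ (-(a - 1))) hk,
          integral_one_add_sq_rpow (by linarith)]
        have e1 := Gamma_add_one (show a - 1 ≠ 0 by linarith)
        have e2 := Gamma_add_one (show a - 1 - 1 / 2 ≠ 0 by linarith)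
        rw [sub_add_cancel] at e1
        rw [show a - 1 - 1 / 2 + 1 = a - 1 / 2 by ring] at e2
        have e3 : (1 + β) * (a - 1 - 1 / 2) = a - 1 := by
          rw [hK, ha]; field_simp; ring
        have e4 : Gamma (a - 1 - 1 / 2) / Gamma (a - 1)
            = (1 + β) * (Gamma (a - 1 / 2) / Gamma a) := by
          have : a - 1 ≠ 0 := by linarith
          rw [e1, e2, mul_div_assoc', ← mul_assoc, e3, mul_div_mul_left _ _ this]
        rw [e4]
        ring)
      ((hfwi β).congr (.of_forall fun x => by
        dsimp only
        rw [hWeq, hsq β hβ0]))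
      (by
        simp only [hWeq, ← hsq β hβ0, hfw]
        exact le_rfl)
    rw [log_scale hβ0 hσ2pos (by positivity), hK, hβ, inv_div] at key
    rw [ha] at key
    rw [add_right_comm]
    exact key
  · have h3' : 0 < 3 * α - 1 := by linarith
    have h3n : α * 3 - 1 ≠ 0 := by linarith
    have h1' : 0 < α - 1 := by linarith
    obtain ⟨γ, hγ⟩ : ∃ γ, γ = (α - 1) / (3 * α - 1) := ⟨_, rfl⟩
    obtain ⟨b, hb⟩ : ∃ b, b = 1 / (α - 1) := ⟨_, rfl⟩
    have hγ0 : 0 < γ := hγ ▸ div_pos h1' h3'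
    have hb0 : 0 < b := hb ▸ one_div_pos.2 h1'
    have hβ : (1 - α) / (3 * α - 1) = -γ := by rw [hγ]; ring
    have hb1 : α / (α - 1) = b + 1 := by rw [hb]; field_simp; ring
    have hK : 1 + -γ = 2 * α / (3 * α - 1) := by rw [hγ]; field_simp; ring
    have hk : 0 < √(γ / σ2) := by positivity
    have hK0 : 0 < 1 + -γ := by rw [hK]; positivity
    have g1 := Gamma_pos_of_pos (show 0 < b + 1 by linarith)
    have g2 := Gamma_pos_of_pos (show 0 < b + 1 + 1 / 2 by linarith)
    have hWeq : ∀ x, max (1 + -γ * ((x - μ) / √σ2) ^ 2) 0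
        = max (1 - (√(γ / σ2) * (x - μ)) ^ 2) 0 := fun x => by
      rw [neg_mul, hsq γ hγ0, ← sub_eq_add_neg]
    have hWW : ∀ u : ℝ, max (1 - u ^ 2) 0 * max (1 - u ^ 2) 0 ^ b
        = max (1 - u ^ 2) 0 ^ (b + 1) := by
      intro u
      rw [rpow_add_one' (le_max_right _ _) (by positivity), mul_comm]
    -- The truncated weight takes values in `[0, 1]`, so `f * W` is dominated by `f`.
    have hfWi : Integrable fun x => f x * max (1 + -γ * ((x - μ) / √σ2) ^ 2) 0 := by
      refine hfi.mono' (by fun_prop) (.of_forall fun x => ?_)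
      have hm : max (1 + -γ * ((x - μ) / √σ2) ^ 2) 0 ≤ 1 := by
        rw [hWeq]
        exact max_le (by linarith [sq_nonneg (√(γ / σ2) * (x - μ))]) zero_le_one
      rw [norm_of_nonneg (mul_nonneg (hf0 x) (le_max_right _ _))]
      exact mul_le_of_le_one_right (hf0 x) hm
    have key := renyi_core hα0 hα1 (s := -1) (Or.inr ⟨rfl, h1⟩)
      (W := fun x => max (1 + -γ * ((x - μ) / √σ2) ^ 2) 0)
      (I := (√(γ / σ2))⁻¹ * (√π * (Gamma (b + 1) / Gamma (b + 1 + 1 / 2)))) (K := 1 + -γ)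
      hf0 hf1 hfα (fun x => le_max_right _ _)
      (fun x y c hy hc hne => by
        have := tangent_lt_rpow h1 hy
          (mul_nonneg hc.le (rpow_nonneg (le_max_right _ _) _)) hne
        linarith)
      (by positivity) hK0
      (by
        simp only [hWeq, ← hb]
        rw [integral_comp_affine (fun u => (max (1 - u ^ 2) 0) ^ b) hk,
          integral_max_one_sub_sq_rpow hb0])
      (by
        simp only [hWeq, ← hb, hWW]
        exact integrable_comp_affine (integrable_max_one_sub_sq_rpow (by linarith)) hk μ)
      (by
        simp only [hWeq, ← hb, hWW]
        rw [integral_comp_affine (fun u => (max (1 - u ^ 2) 0) ^ (b + 1)) hk,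
          integral_max_one_sub_sq_rpow (by linarith)]
        have e1 := Gamma_add_one (show b + 1 ≠ 0 by linarith)
        have e2 := Gamma_add_one (show b + 1 + 1 / 2 ≠ 0 by linarith)
        have e3 : b + 1 = (1 + -γ) * (b + 1 + 1 / 2) := by
          rw [hK, hb]; field_simp; ring
        have e4 : Gamma (b + 1 + 1) / Gamma (b + 1 + 1 + 1 / 2)
            = (1 + -γ) * (Gamma (b + 1) / Gamma (b + 1 + 1 / 2)) := by
          have : b + 1 + 1 / 2 ≠ 0 := by linarith
          rw [show b + 1 + 1 + 1 / 2 = b + 1 + 1 / 2 + 1 by ring, e1, e2, mul_div_mul_comm]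
          congr 1
          rw [div_eq_iff this]
          exact e3
        rw [e4]
        ring)
      hfWi
      (by
        have : 1 + -γ ≤ ∫ x, f x * max (1 + -γ * ((x - μ) / √σ2) ^ 2) 0 := by
          rw [← hfw (-γ)]
          exact integral_mono (hfwi _) hfWi fun x =>
            mul_le_mul_of_nonneg_left (le_max_left _ _) (hf0 x)
        linarith)
    have hlogK : 1 / (1 - α) * log (1 + -γ) = 1 / (α - 1) * log ((3 * α - 1) / (2 * α)) := by
      rw [hK, ← inv_div (2 * α), log_inv, ← neg_sub α 1, one_div_neg_eq_neg_one_div]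
      ring
    rw [log_scale hγ0 hσ2pos (by positivity), hlogK, hγ, inv_div, ← hγ, ← hβ] at key
    rw [hb1, add_right_comm]
    exact key
end

section
/- Let α > 1/2, α ≠ 1, and let 𝒳 be a continuous real random variable with 𝒳 > 0 almost surely, probability density f, finite differential Rényi entropy h_α(𝒳), and finite mean μ. Then h_α(𝒳) ≤ ln μ + (α/(1−α)) ln( α/(2α−1) ), with equality if and only if 𝒳 is α-exponential, i.e., f(x) is proportional on (0,∞) to (1 + βx/μ)^{1/(α−1)} restricted to where this is nonnegative, with β = (1−α)/(2α−1). -/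
/-!
Write `β = (1 - α) / (2α - 1)`, `L x = 1 + β x / μ`, `m x = (max (L x) 0) ^ (1 / (α - 1))` and
`Z = μ (2α - 1) / α`.  Two elementary integrals (`integral_max_rpow`) give `∫ m = Z` and
`∫ m ^ α = μ` over `(0, ∞)`, so that `m / Z` is the α-exponential density.

The tangent line of `t ↦ t ^ α` at `m x` (Bernoulli's inequality, `tangent_gap`) shows that
`(1 - α) ((Z f) ^ α - (1 - α) m ^ α - α L (Z f)) ≤ 0` on `(0, ∞)`, with equality exactly where
`Z f = m`; where `L x ≤ 0`, which only happens for `α > 1`, the inequality is trivial.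
The last term is affine in `x`, so its integral depends on `f` only through the total mass and the
mean.  Integrating gives `(1 - α) (Z ^ α ∫ f ^ α - μ) ≤ 0`, with equality iff `Z f = m` a.e.
Taking logarithms yields the theorem.
-/

open MeasureTheory Real Set Filter Topology

/-- The two hypotheses on `q` are the conditions for convergence (`b > 0`) and for continuity at
the point where the base vanishes (`b < 0`). -/
lemma integral_max_rpow (b q : ℝ) (hb : b ≠ 0) (h1 : 0 < b → q < -1) (h2 : b < 0 → 0 < q) :
    IntegrableOn (fun x : ℝ => (max (1 + b * x) 0) ^ q) (Ioi 0) ∧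
    ∫ x in Ioi (0 : ℝ), (max (1 + b * x) 0) ^ q = -1 / (b * (q + 1)) := by
  have hq1 : q + 1 ≠ 0 := by
    rcases lt_or_gt_of_ne hb with h | h
    · have := h2 h; linarith
    · have := h1 h; linarith
  have hder : ∀ x : ℝ, 0 < 1 + b * x →
      HasDerivAt (fun x : ℝ => (1 + b * x) ^ (q + 1) / (b * (q + 1))) ((1 + b * x) ^ q) x := by
    intro x hx
    have h0 : HasDerivAt (fun x : ℝ => 1 + b * x) b x := by
      simpa using ((hasDerivAt_id x).const_mul b).const_add 1
    have h3 := (h0.rpow_const (p := q + 1) (Or.inl hx.ne')).div_const (b * (q + 1))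
    rw [add_sub_cancel_right, mul_div_cancel_left₀ _ (mul_ne_zero hb hq1)] at h3
    exact h3
  rcases lt_or_gt_of_ne hb with hneg | hpos
  · -- The integrand is supported on `(0, c]` with `c = -1 / b`.
    have hq := h2 hneg
    set c : ℝ := -1 / b with hc
    have hbc : b * c = -1 := by rw [hc]; field_simp
    have hc0 : 0 < c := div_pos_of_neg_of_neg (by norm_num) hneg
    have hcont : Continuous (fun x : ℝ => (max (1 + b * x) 0) ^ q) :=
      Continuous.rpow_const (by fun_prop) (fun _ => Or.inr hq.le)
    have hz : ∀ x ∈ Ioi (0 : ℝ) \ Ioc 0 c, (max (1 + b * x) 0) ^ q = 0 := by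
      rintro x ⟨hx, hx'⟩
      have hxc : c < x := by
        by_contra h
        exact hx' ⟨hx, not_lt.mp h⟩
      have : 1 + b * x ≤ 0 := by nlinarith
      rw [max_eq_right this, zero_rpow hq.ne']
    have hioc : IntegrableOn (fun x : ℝ => (max (1 + b * x) 0) ^ q) (Ioc 0 c) :=
      hcont.integrableOn_Ioc
    refine ⟨hioc.of_forall_sdiff_eq_zero measurableSet_Ioi hz, ?_⟩
    rw [setIntegral_eq_of_subset_of_forall_sdiff_eq_zero measurableSet_Ioi
      (fun x hx => hx.1) hz, ← intervalIntegral.integral_of_le hc0.le]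
    rw [intervalIntegral.integral_eq_sub_of_hasDerivAt_of_le hc0.le
      (f := fun x : ℝ => (1 + b * x) ^ (q + 1) / (b * (q + 1)))]
    · simp only [hbc]
      rw [show (1 : ℝ) + -1 = 0 by norm_num, zero_rpow hq1]
      simp [neg_div]
    · refine (Continuous.div_const (Continuous.rpow_const (by fun_prop) ?_) _).continuousOn
      intro _; right; linarith
    · intro x hx
      have : 0 < 1 + b * x := by nlinarith [hx.2]
      rw [max_eq_left this.le]
      exact hder x this
    · exact hcont.intervalIntegrable _ _
  · have hq := h1 hpos
    have hL : ∀ x : ℝ, 0 ≤ x → 0 < 1 + b * x := fun x hx => by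
      have := mul_nonneg hpos.le hx; linarith
    have hd : ∀ x ∈ Ici (0 : ℝ), HasDerivAt (fun x : ℝ => (1 + b * x) ^ (q + 1) / (b * (q + 1)))
        ((max (1 + b * x) 0) ^ q) x := by
      intro x hx
      rw [max_eq_left (hL x hx).le]
      exact hder x (hL x hx)
    have hnn : ∀ x ∈ Ioi (0 : ℝ), 0 ≤ (max (1 + b * x) 0) ^ q :=
      fun x _ => rpow_nonneg (le_max_right _ _) _
    have ht : Tendsto (fun x : ℝ => (1 + b * x) ^ (q + 1) / (b * (q + 1))) atTop (𝓝 0) := by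
      have h3 : Tendsto (fun x : ℝ => 1 + b * x) atTop atTop :=
        tendsto_atTop_add_const_left _ _ (tendsto_id.const_mul_atTop hpos)
      have h4 := (tendsto_rpow_neg_atTop (y := -(q + 1)) (by linarith)).comp h3
      simpa using h4.div_const (b * (q + 1))
    refine ⟨integrableOn_Ioi_deriv_of_nonneg' hd hnn ht, ?_⟩
    rw [integral_Ioi_of_hasDerivAt_of_nonneg' hd hnn ht]
    simp [neg_div]

/-- The tangent-line inequality for `s ↦ s ^ α` at the point `m = (max L 0) ^ (1 / (α - 1))`, whose
slope there is `α * max L 0`, together with its equality case.  The factor `1 - α` absorbs the change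
from concavity to convexity at `α = 1`. -/
lemma tangent_gap (α : ℝ) (h0 : 0 < α) (h1 : α ≠ 1) (L s : ℝ) (hs : 0 ≤ s)
    (hL : α < 1 → 0 < L) :
    (1 - α) * (s ^ α - (1 - α) * ((max L 0) ^ (1 / (α - 1))) ^ α - α * (L * s)) ≤ 0 ∧
    ((1 - α) * (s ^ α - (1 - α) * ((max L 0) ^ (1 / (α - 1))) ^ α - α * (L * s)) = 0 →
      s = (max L 0) ^ (1 / (α - 1))) := by
  have hne1 : α - 1 ≠ 0 := sub_ne_zero.mpr h1
  by_cases hLp : 0 < L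
  · rw [max_eq_left hLp.le]
    set m := L ^ (1 / (α - 1)) with hm
    have hm0 : 0 < m := rpow_pos_of_pos hLp _
    have hLm : L * m = m ^ α := by
      have : L = m ^ (α - 1) := by
        rw [hm, ← rpow_mul hLp.le, one_div, inv_mul_cancel₀ hne1, rpow_one]
      rw [this, ← rpow_add_one hm0.ne']; ring_nf
    -- Homogeneity reduces the claim to Bernoulli's inequality for `u = s / m`.
    obtain ⟨u, rfl⟩ : ∃ u, s = u * m := ⟨s / m, by field_simp⟩
    have hu : 0 ≤ u := nonneg_of_mul_nonneg_left hs hm0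
    have key : (1 - α) * ((u * m) ^ α - (1 - α) * m ^ α - α * (L * (u * m))) =
        m ^ α * ((1 - α) * (u ^ α - (1 + α * (u - 1)))) := by
      rw [mul_rpow hu hm0.le, show L * (u * m) = u * (L * m) by ring, hLm]; ring
    rw [key]
    have hmα : 0 < m ^ α := rpow_pos_of_pos hm0 _
    by_cases hu1 : u = 1
    · subst hu1; simp
    · have hlt : (1 - α) * (u ^ α - (1 + α * (u - 1))) < 0 := by
        rcases lt_or_gt_of_ne h1 with h | h
        · have := rpow_one_add_lt_one_add_mul_self (s := u - 1) (by linarith)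
            (sub_ne_zero.mpr hu1) h0 h
          rw [add_sub_cancel] at this
          exact mul_neg_of_pos_of_neg (by linarith) (by linarith)
        · have := one_add_mul_self_lt_rpow_one_add (s := u - 1) (by linarith)
            (sub_ne_zero.mpr hu1) h
          rw [add_sub_cancel] at this
          exact mul_neg_of_neg_of_pos (by linarith) (by linarith)
      have := mul_neg_of_pos_of_neg hmα hlt
      exact ⟨this.le, fun h => absurd h this.ne⟩
  · have hα : 1 < α := by
      rcases lt_or_gt_of_ne h1 with h | h
      · exact absurd (hL h) hLp
      · exact h
    push Not at hLp
    have hq : 1 / (α - 1) ≠ 0 := one_div_ne_zero hne1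
    rw [max_eq_right hLp, zero_rpow hq, zero_rpow h0.ne']
    have hsα : 0 ≤ s ^ α := rpow_nonneg hs _
    have hLs : L * s ≤ 0 := mul_nonpos_of_nonpos_of_nonneg hLp hs
    have hαLs : α * (L * s) ≤ 0 := mul_nonpos_of_nonneg_of_nonpos h0.le hLs
    refine ⟨mul_nonpos_of_nonpos_of_nonneg (by linarith) (by linarith), fun h => ?_⟩
    have h' : s ^ α - (1 - α) * 0 - α * (L * s) = 0 :=
      (mul_eq_zero.mp h).resolve_left (by linarith)
    exact (rpow_eq_zero hs h0.ne').mp (by linarith)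

/-- Passage from the integrated tangent inequality to logarithms. -/
lemma log_gap (α A μ : ℝ) (h1 : α ≠ 1) (hA : 0 < A) (hμ : 0 < μ) (h : (1 - α) * (A - μ) ≤ 0) :
    1 / (1 - α) * (log A - log μ) ≤ 0 ∧
    (1 / (1 - α) * (log A - log μ) = 0 ↔ A = μ) := by
  constructor
  · rcases lt_or_gt_of_ne h1 with h2 | h2
    · have : A ≤ μ := by nlinarith
      exact mul_nonpos_of_nonneg_of_nonpos (one_div_nonneg.mpr (by linarith))
        (sub_nonpos.mpr (log_le_log hA this))
    · have : μ ≤ A := by nlinarith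
      exact mul_nonpos_of_nonpos_of_nonneg (one_div_nonpos.mpr (by linarith))
        (sub_nonneg.mpr (log_le_log hμ this))
  · constructor
    · intro h2
      have := (mul_eq_zero.mp h2).resolve_left (one_div_ne_zero (sub_ne_zero.mpr h1.symm))
      exact log_injOn_pos hA hμ (sub_eq_zero.mp this)
    · rintro rfl; simp

/-- Maximum Rényi-entropy bound under a mean constraint: if `α > 1/2`, `α ≠ 1`, and `𝒳 > 0`
a.s. has density `f`, finite `h_α(𝒳)` and finite mean `μ`, then
`h_α(𝒳) ≤ ln μ + (α/(1-α)) ln(α/(2α-1))`, with equality iff `𝒳` is α-exponential. -/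
theorem maxent_renyi_mean
    (α : ℝ) (hα : 1 / 2 < α) (hα1 : α ≠ 1)
    (f : ℝ → ℝ) (hfm : Measurable f) (hf0 : ∀ x, 0 ≤ f x)
    (hf1 : ∫ x, f x = 1) (hfi : Integrable f)
    (hpos : ∀ᵐ x ∂(volume : Measure ℝ), x ≤ 0 → f x = 0)
    (hfα : Integrable (fun x => f x ^ α))
    (μ : ℝ) (hμ : μ = ∫ x, x * f x) (hμi : Integrable (fun x => x * f x)) :
    (1 / (1 - α)) * Real.log (∫ x, f x ^ α) ≤
      Real.log μ + (α / (1 - α)) * Real.log (α / (2 * α - 1)) ∧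
    ((1 / (1 - α)) * Real.log (∫ x, f x ^ α) =
        Real.log μ + (α / (1 - α)) * Real.log (α / (2 * α - 1)) ↔
      ∃ c > 0, f =ᵐ[volume] Set.indicator (Set.Ioi (0 : ℝ))
        (fun x => c * (max (1 + (1 - α) / (2 * α - 1) * x / μ) 0) ^ (1 / (α - 1)))) := by
  have hα0 : 0 < α := by linarith
  have h2α : 0 < 2 * α - 1 := by linarith
  have h2α_ne : 2 * α - 1 ≠ 0 := h2α.ne'
  have hne1 : α - 1 ≠ 0 := sub_ne_zero.mpr hα1
  have hne2 : 1 - α ≠ 0 := sub_ne_zero.mpr hα1.symm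
  have hnz : ¬ f =ᵐ[volume] 0 := by
    intro h
    rw [integral_congr_ae h] at hf1
    simp at hf1
  -- Positivity of the mean and of `∫ f ^ α`.
  have hμ0 : 0 < μ := by
    have hnn : 0 ≤ᵐ[volume] fun x => x * f x := by
      filter_upwards [hpos] with x hx
      rcases le_or_gt x 0 with h | h
      · simp [hx h]
      · exact mul_nonneg h.le (hf0 x)
    rw [hμ]
    refine lt_of_le_of_ne (integral_nonneg_of_ae hnn) (fun h => hnz ?_)
    have h2 := (integral_eq_zero_iff_of_nonneg_ae hnn hμi).mp h.symm
    filter_upwards [hpos, h2] with x hx hx2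
    rcases le_or_gt x 0 with h | h
    · exact hx h
    · exact (mul_eq_zero.mp hx2).resolve_left h.ne'
  have hI0 : 0 < ∫ x, f x ^ α := by
    have hnn : 0 ≤ fun x => f x ^ α := fun x => rpow_nonneg (hf0 x) _
    refine lt_of_le_of_ne (integral_nonneg hnn) (fun h => hnz ?_)
    have h2 := (integral_eq_zero_iff_of_nonneg hnn hfα).mp h.symm
    filter_upwards [h2] with x hx2
    exact (rpow_eq_zero (hf0 x) hα0.ne').mp hx2
  set I := ∫ x, f x ^ α with hI
  set b : ℝ := (1 - α) / (2 * α - 1) / μ with hb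
  have hb0 : b ≠ 0 := div_ne_zero (div_ne_zero hne2 h2α.ne') hμ0.ne'
  have hLb : ∀ x : ℝ, (1 - α) / (2 * α - 1) * x / μ = b * x := fun x => by rw [hb]; ring
  simp only [hLb]
  set m : ℝ → ℝ := fun x => (max (1 + b * x) 0) ^ (1 / (α - 1)) with hm
  have hbpos : 0 < b → α < 1 := by
    intro h
    by_contra h'
    have : b ≤ 0 := div_nonpos_of_nonpos_of_nonneg
      (div_nonpos_of_nonpos_of_nonneg (by linarith) h2α.le) hμ0.le
    linarith
  have hbneg : b < 0 → 1 < α := by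
    intro h
    by_contra h'
    have : 0 ≤ b := div_nonneg (div_nonneg (by linarith) h2α.le) hμ0.le
    linarith
  set Z : ℝ := μ * (2 * α - 1) / α with hZ
  have hZ0 : 0 < Z := by positivity
  obtain ⟨hm1, hm1'⟩ := integral_max_rpow b (1 / (α - 1)) hb0
    (fun h => by
      have := hbpos h
      rw [div_lt_iff_of_neg (by linarith)]; linarith)
    (fun h => by
      have := hbneg h
      exact one_div_pos.mpr (by linarith))
  obtain ⟨hm2, hm2'⟩ := integral_max_rpow b (α / (α - 1)) hb0
    (fun h => by
      have := hbpos h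
      rw [div_lt_iff_of_neg (by linarith)]; linarith)
    (fun h => by
      have := hbneg h
      exact div_pos hα0 (by linarith))
  have hmα : ∀ x : ℝ, (max (1 + b * x) 0) ^ (α / (α - 1)) = m x ^ α := fun x => by
    rw [hm, ← rpow_mul (le_max_right _ _)]; ring_nf
  simp only [hmα] at hm2 hm2'
  have hmZ : ∫ x in Ioi (0 : ℝ), m x = Z := by
    rw [hm, hm1', hb, hZ, show 1 / (α - 1) + 1 = α / (α - 1) by field_simp; ring]
    field_simp
    ring
  have hmμ : ∫ x in Ioi (0 : ℝ), m x ^ α = μ := by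
    have e : ∀ t : ℝ, t ≠ 0 → -1 / ((1 - α) / t / μ * (t / (α - 1))) = μ := by
      intro t ht
      field_simp
      ring
    rw [hm2', hb, show α / (α - 1) + 1 = (2 * α - 1) / (α - 1) by field_simp; ring]
    exact e _ h2α_ne
  -- All integrals over `ℝ` may be taken over `(0, ∞)`.
  have hr : ∀ g : ℝ → ℝ, (∀ x, f x = 0 → g x = 0) → ∫ x in Ioi (0 : ℝ), g x = ∫ x, g x := by
    intro g hg
    refine setIntegral_eq_integral_of_ae_compl_eq_zero ?_
    filter_upwards [hpos] with x hx hx2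
    exact hg x (hx (not_lt.mp hx2))
  have hrf : ∫ x in Ioi (0 : ℝ), f x = 1 := by rw [hr f (fun _ h => h), hf1]
  have hrI : ∫ x in Ioi (0 : ℝ), f x ^ α = I :=
    hr _ (fun x h => by rw [h, zero_rpow hα0.ne'])
  have hrμ : ∫ x in Ioi (0 : ℝ), x * f x = μ := by
    rw [hr _ (fun x h => by rw [h, mul_zero]), hμ]
  -- The integrated tangent inequality.
  set D : ℝ → ℝ := fun x => (1 - α) * ((Z * f x) ^ α - (1 - α) * m x ^ α
    - α * ((1 + b * x) * (Z * f x))) with hD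
  have hDeq : D = fun x => (1 - α) * ((Z ^ α * f x ^ α - (1 - α) * m x ^ α)
      - (α * Z * f x + α * Z * b * (x * f x))) := by
    funext x
    simp only [hD]
    rw [mul_rpow hZ0.le (hf0 x)]
    ring
  have i1 := (hfα.integrableOn (s := Ioi 0)).const_mul (Z ^ α)
  have i2 := hm2.const_mul (1 - α)
  have i3 := (hfi.integrableOn (s := Ioi 0)).const_mul (α * Z)
  have i4 := (hμi.integrableOn (s := Ioi 0)).const_mul (α * Z * b)
  have hDi : IntegrableOn D (Ioi 0) := by
    rw [hDeq]
    exact ((i1.sub i2).sub (i3.add i4)).const_mul _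
  have hDint : ∫ x in Ioi (0 : ℝ), D x = (1 - α) * (Z ^ α * I - μ) := by
    rw [hDeq, integral_const_mul]
    have e1 : ∫ x in Ioi (0 : ℝ), ((Z ^ α * f x ^ α - (1 - α) * m x ^ α)
        - (α * Z * f x + α * Z * b * (x * f x))) =
        (Z ^ α * I - (1 - α) * μ) - (α * Z * 1 + α * Z * b * μ) := by
      have i12 : Integrable (fun x => Z ^ α * f x ^ α - (1 - α) * m x ^ α)
          (volume.restrict (Ioi 0)) := i1.sub i2
      have i34 : Integrable (fun x => α * Z * f x + α * Z * b * (x * f x))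
          (volume.restrict (Ioi 0)) := i3.add i4
      rw [integral_sub i12 i34, integral_sub i1 i2, integral_add i3 i4]
      simp only [integral_const_mul, hrf, hrI, hrμ, hmμ]
    rw [e1]
    have e2 : Z * 1 + Z * b * μ = μ := by
      rw [hZ, hb]; field_simp; ring
    linear_combination (1 - α) * (-α) * e2
  have hgap : ∀ x ∈ Ioi (0 : ℝ), D x ≤ 0 ∧ (D x = 0 → Z * f x = m x) := by
    intro x hx
    refine tangent_gap α hα0 hα1 (1 + b * x) (Z * f x) (mul_nonneg hZ0.le (hf0 x)) ?_
    intro h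
    have : 0 ≤ b := by
      by_contra hbn
      have := hbneg (not_le.mp hbn)
      linarith
    have := mul_nonneg this (le_of_lt hx)
    linarith
  have hle : (1 - α) * (Z ^ α * I - μ) ≤ 0 := by
    rw [← hDint]
    exact setIntegral_nonpos measurableSet_Ioi (fun x hx => (hgap x hx).1)
  have hZα : 0 < Z ^ α := rpow_pos_of_pos hZ0 _
  obtain ⟨hlog, hlogeq⟩ := log_gap α (Z ^ α * I) μ hα1 (mul_pos hZα hI0) hμ0 hle
  have hdiff : 1 / (1 - α) * log I - (log μ + α / (1 - α) * log (α / (2 * α - 1))) =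
      1 / (1 - α) * (log (Z ^ α * I) - log μ) := by
    have : α / (2 * α - 1) = μ / Z := by rw [hZ]; field_simp
    rw [this, log_div hμ0.ne' hZ0.ne', log_mul hZα.ne' hI0.ne', log_rpow hZ0]
    field_simp
    ring
  refine ⟨by linarith, ?_⟩
  rw [← sub_eq_zero, hdiff, hlogeq]
  constructor
  · intro hA
    refine ⟨1 / Z, one_div_pos.mpr hZ0, ?_⟩
    have hD0 : ∫ x in Ioi (0 : ℝ), -D x = 0 := by
      rw [integral_neg, hDint, hA]; simp
    have hnn : 0 ≤ᵐ[volume.restrict (Ioi 0)] fun x => -D x := by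
      filter_upwards [ae_restrict_mem measurableSet_Ioi] with x hx
      simpa using (hgap x hx).1
    have hae := (integral_eq_zero_iff_of_nonneg_ae hnn hDi.neg).mp hD0
    have hae' := (ae_restrict_iff' measurableSet_Ioi).mp hae
    filter_upwards [hae', hpos] with x hx hx2
    by_cases h : x ∈ Ioi (0 : ℝ)
    · rw [indicator_of_mem h]
      have h3 := (hgap x h).2 (by simpa using hx h)
      change f x = 1 / Z * m x
      rw [← h3]; field_simp
    · rw [indicator_of_notMem h]
      exact hx2 (not_lt.mp h)
  · rintro ⟨c, hc, hfc⟩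
    have hfc' : ∀ᵐ x ∂volume.restrict (Ioi (0 : ℝ)), f x = c * m x := by
      filter_upwards [ae_restrict_of_ae hfc, ae_restrict_mem measurableSet_Ioi] with x hx hx2
      rw [hx, indicator_of_mem hx2]
    -- Unit mass forces `c = 1 / Z`.
    have hcZ : c * Z = 1 := by
      rw [← hrf, integral_congr_ae hfc', integral_const_mul, hmZ]
    have : I = c ^ α * μ := by
      rw [← hrI, ← hmμ, ← integral_const_mul]
      refine integral_congr_ae ?_
      filter_upwards [hfc'] with x hx
      rw [hx, mul_rpow hc.le (rpow_nonneg (le_max_right _ _) _)]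
    rw [this, ← mul_assoc, ← mul_rpow hZ0.le hc.le, mul_comm Z c, hcZ, one_rpow, one_mul]
end

section
/- Let X be a discrete random variable taking countably many real values, let T : ℝ → [0, ∞) be measurable with Z = ∫ e^{−T(x)} dx finite and positive, let f(x) = e^{−T(x)}/Z, and let 𝒳 be a continuous real random variable with density f such that E[T(X)] = E[T(𝒳)] = m is finite. Then H(X) ≤ h(𝒳) + ln Z′, where Z′ = Σ_x f(x), the sum being over all values x taken by X. -/
/-!
With `W = ∑ f (v i)`, the numbers `f (v i) / W` form a probability distribution on the values of
`X`. Since `log (1 / f x) = T x + log Z`, the continuous entropy is `m + log Z`, while the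
cross-entropy of `p` relative to `f (v i) / W` is `m + log Z + log W`. Gibbs' inequality, obtained
by summing the pointwise bound `mul_log_inv_le` (a form of `log t ≤ t - 1`), bounds the entropy of
`p` by this cross-entropy.
-/

open MeasureTheory Real

/-- The pointwise form of Gibbs' inequality; the correction `q - p` sums to zero when both are
probability weights. At `p = 0` the left side is `0 * log (1 / 0) = 0`. -/
lemma mul_log_inv_le {p q : ℝ} (hp : 0 ≤ p) (hq : 0 < q) :
    p * Real.log (1 / p) ≤ p * Real.log (1 / q) + (q - p) := by
  rcases hp.eq_or_lt with rfl | hp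
  · simpa using hq.le
  · have h := Real.log_le_sub_one_of_pos (div_pos hq hp)
    rw [Real.log_div hq.ne' hp.ne'] at h
    have h2 := mul_le_mul_of_nonneg_left h hp.le
    have h3 : p * (q / p - 1) = q - p := by field_simp
    simp only [one_div, Real.log_inv]
    linarith

/-- Mixed discrete-continuous Kullback-type inequality: if `X` is a discrete random variable
taking countably many real values `v i` with probabilities `p i`, `f(x) = e^{-T(x)}/Z`, and
`𝒳` has density `f` with `E[T(X)] = E[T(𝒳)] = m` finite, then
`H(X) ≤ h(𝒳) + ln Z'` where `Z' = Σ_x f(x)` over the values of `X`. -/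
theorem mixed_kullback_inequality
    {ι : Type*} [Countable ι] (v : ι → ℝ) (hv : Function.Injective v)
    (p : ι → ℝ) (hp0 : ∀ i, 0 ≤ p i) (hp1 : ∑' i, p i = 1)
    (T : ℝ → ℝ) (hTm : Measurable T) (hT0 : ∀ x, 0 ≤ T x)
    (Z : ℝ) (hZ : Z = ∫ x, Real.exp (-T x))
    (hZi : Integrable (fun x => Real.exp (-T x))) (hZpos : 0 < Z)
    (f : ℝ → ℝ) (hf : f = fun x => Real.exp (-T x) / Z)
    (m : ℝ) (hmX : m = ∑' i, T (v i) * p i) (hms : Summable (fun i => T (v i) * p i))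
    (hm𝒳 : m = ∫ x, T x * f x) (hmi : Integrable (fun x => T x * f x))
    (hZ's : Summable (fun i => f (v i))) :
    (∑' i, p i * Real.log (1 / p i)) ≤
      (∫ x, f x * Real.log (1 / f x)) + Real.log (∑' i, f (v i)) := by
  have hfpos : ∀ x, 0 < f x := fun x => by rw [hf]; positivity
  have hlog : ∀ x, Real.log (1 / f x) = T x + Real.log Z := fun x => by
    rw [hf, one_div, Real.log_inv, Real.log_div (Real.exp_pos _).ne' hZpos.ne', Real.log_exp]
    ring
  have hfi : Integrable f := by rw [hf]; exact hZi.div_const Z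
  have hf1 : ∫ x, f x = 1 := by
    rw [hf, integral_div, ← hZ, div_self hZpos.ne']
  have hcont : ∫ x, f x * Real.log (1 / f x) = m + Real.log Z := by
    have : ∀ x, f x * Real.log (1 / f x) = T x * f x + f x * Real.log Z := fun x => by
      rw [hlog]; ring
    simp_rw [this]
    rw [integral_add hmi (hfi.mul_const _), integral_mul_const, hf1, ← hm𝒳, one_mul]
  -- A divergent series would have `tsum` equal to `0`, not `1`.
  have hps : Summable p := by
    by_contra h
    rw [tsum_eq_zero_of_not_summable h] at hp1
    exact zero_ne_one hp1
  have hple : ∀ i, p i ≤ 1 := fun i => hp1 ▸ hps.le_tsum i fun j _ => hp0 j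
  have hne : Nonempty ι := by
    by_contra h
    rw [not_nonempty_iff] at h
    simp at hp1
  set W := ∑' i, f (v i) with hW
  have hWpos : 0 < W :=
    hZ's.tsum_pos (fun i => (hfpos _).le) hne.some (hfpos _)
  have hbound : ∀ i, p i * Real.log (1 / p i) ≤
      T (v i) * p i + p i * (Real.log Z + Real.log W) + (f (v i) / W - p i) := fun i => by
    have h := mul_log_inv_le (hp0 i) (div_pos (hfpos (v i)) hWpos)
    have e : Real.log (1 / (f (v i) / W)) = T (v i) + Real.log Z + Real.log W := by
      rw [← hlog, ← Real.log_mul (one_div_pos.2 (hfpos _)).ne' hWpos.ne']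
      congr 1
      field_simp
    rw [e] at h
    linarith
  have hsum : HasSum
      (fun i => T (v i) * p i + p i * (Real.log Z + Real.log W) + (f (v i) / W - p i))
      (m + 1 * (Real.log Z + Real.log W) + (W / W - 1)) :=
    ((hmX ▸ hms.hasSum).add ((hp1 ▸ hps.hasSum).mul_right _)).add
      ((hZ's.hasSum.div_const W).sub (hp1 ▸ hps.hasSum))
  have hnonneg : ∀ i, 0 ≤ p i * Real.log (1 / p i) := fun i => by
    rw [one_div, Real.log_inv]
    exact mul_nonneg (hp0 i) (neg_nonneg.2 (Real.log_nonpos (hp0 i) (hple i)))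
  have hmain := (Summable.of_nonneg_of_le hnonneg hbound hsum.summable).tsum_le_tsum hbound
    hsum.summable
  rw [hsum.tsum_eq, div_self hWpos.ne'] at hmain
  rw [hcont]
  linarith
end

section
/- Massey's inequality: let X be an integer-valued random variable with finite variance σ². Then H(X) < (1/2) ln( 2πe(σ² + 1/12) ). -/
/-!
Put `s = σ² + 1/12` and let `E x = exp (-(x - μ)² / (2s))`, so that `E / √(2πs)` is the Gaussian
density of mean `μ` and variance `s`. The weights
`r k = exp (-((k - μ)² + 1/12) / (2s)) / √(2πs)` are the geometric means of this density over the
unit cells `[k - 1/2, k + 1/2]`, because `(k - μ)² + 1/12` is the mean of `(x - μ)²` over the cell.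
By Jensen's inequality for `exp` (`geom_mean_lt_cell_integral`), which is strict here, `r k` is
less than the mass of the cell, and hence `∑ r k < 1` (`tsum_cell_lt`). Gibbs' inequality then bounds
the entropy by `∑ p k * log (1 / r k) + (∑ r k - 1)`, and
`∑ p k * log (1 / r k) = log (2πs) / 2 + (σ² + 1/12) / (2s) = log (2πes) / 2`.
-/

open MeasureTheory Real

/-- Strict Jensen inequality for `exp` on a unit cell centred at `c`, obtained by integrating the
tangent line inequality for `exp` at the mean of the exponent. It is strict because the exponent
differs from its mean at the centre of the cell. -/
lemma geom_mean_lt_cell_integral (μ s : ℝ) (hs : 0 < s) (c : ℝ) :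
    exp (-(1 / (2 * s)) * ((c - μ) ^ 2 + 1 / 12)) <
      ∫ x in (c - 1 / 2)..(c + 1 / 2), exp (-(1 / (2 * s)) * (x - μ) ^ 2) := by
  set b : ℝ := 1 / (2 * s) with hb
  have hbpos : 0 < b := by positivity
  set m : ℝ := -b * ((c - μ) ^ 2 + 1 / 12) with hm
  have hmean : ∫ x in (c - 1 / 2)..(c + 1 / 2), exp m * (1 + (-b * (x - μ) ^ 2 - m)) = exp m := by
    have h1 : ∫ x in (c - 1 / 2)..(c + 1 / 2), (x - μ) ^ 2 = (c - μ) ^ 2 + 1 / 12 := by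
      rw [intervalIntegral.integral_comp_sub_right (fun x => x ^ 2) μ, integral_pow]
      push_cast
      ring
    rw [intervalIntegral.integral_const_mul, intervalIntegral.integral_add,
      intervalIntegral.integral_sub, intervalIntegral.integral_const_mul, h1]
    · simp only [intervalIntegral.integral_const, smul_eq_mul, hm]
      ring
    all_goals exact Continuous.intervalIntegrable (by fun_prop) _ _
  have htan : ∀ x, exp m * (1 + (-b * (x - μ) ^ 2 - m)) ≤ exp (-b * (x - μ) ^ 2) := by
    intro x
    have h := add_one_le_exp (-b * (x - μ) ^ 2 - m)
    calc _ ≤ exp m * exp (-b * (x - μ) ^ 2 - m) := by gcongr; linarith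
      _ = _ := by rw [← exp_add]; congr 1; ring
  rw [← hmean]
  refine intervalIntegral.integral_lt_integral_of_continuousOn_of_le_of_exists_lt (by linarith)
    (Continuous.continuousOn (by fun_prop)) (Continuous.continuousOn (by fun_prop))
    (fun x _ => htan x) ⟨c, ⟨by linarith, by linarith⟩, ?_⟩
  have hne : -b * (c - μ) ^ 2 - m ≠ 0 := by
    rw [hm]
    intro h
    nlinarith
  have h := add_one_lt_exp hne
  calc _ < exp m * exp (-b * (c - μ) ^ 2 - m) := by gcongr; linarith
    _ = _ := by rw [← exp_add]; congr 1; ring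

/-- The unnormalised cell weights sum to less than the total Gaussian mass `√(2πs)`. -/
lemma tsum_cell_lt (μ s : ℝ) (hs : 0 < s) :
    Summable (fun k : ℤ => exp (-(1 / (2 * s)) * (((k : ℝ) - μ) ^ 2 + 1 / 12))) ∧
      ∑' k : ℤ, exp (-(1 / (2 * s)) * (((k : ℝ) - μ) ^ 2 + 1 / 12)) < √(2 * π * s) := by
  have hbpos : 0 < 1 / (2 * s) := by positivity
  have hint : Integrable (fun x : ℝ => exp (-(1 / (2 * s)) * (x - μ) ^ 2)) :=
    (integrable_exp_neg_mul_sq hbpos).comp_sub_right μ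
  have hval : ∫ x : ℝ, exp (-(1 / (2 * s)) * (x - μ) ^ 2) = √(2 * π * s) := by
    rw [integral_sub_right_eq_self (fun x : ℝ => exp (-(1 / (2 * s)) * x ^ 2)) μ,
      integral_gaussian]
    congr 1
    field_simp
  have hsum : HasSum (fun k : ℤ => ∫ x in ((k : ℝ) - 1 / 2)..((k : ℝ) + 1 / 2),
      exp (-(1 / (2 * s)) * (x - μ) ^ 2)) √(2 * π * s) := by
    rw [← hval]
    have hcell : ∀ k : ℤ, (k : ℝ) - 1 / 2 = -(1 / 2) + k ∧
        (k : ℝ) + 1 / 2 = -(1 / 2) + k + 1 := fun k => ⟨by ring, by ring⟩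
    simp only [fun k => (hcell k).1, fun k => (hcell k).2]
    exact hint.hasSum_intervalIntegral (-(1 / 2))
  have hlt := fun k : ℤ => geom_mean_lt_cell_integral μ s hs (k : ℝ)
  have hsm := Summable.of_nonneg_of_le (fun k : ℤ => (exp_pos _).le) (fun k => (hlt k).le)
    hsum.summable
  refine ⟨hsm, ?_⟩
  rw [← hsum.tsum_eq]
  exact hsm.tsum_lt_tsum (i := 0) (fun k => (hlt k).le) (hlt 0) hsum.summable

/-- The termwise form of Gibbs' inequality, with `r = exp (-t)`. -/
lemma mul_log_one_div_le (p t : ℝ) (hp : 0 ≤ p) :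
    p * log (1 / p) ≤ p * t + (exp (-t) - p) := by
  rcases hp.eq_or_lt with rfl | hp
  · simpa using (exp_pos (-t)).le
  · have h := log_le_sub_one_of_pos (show 0 < exp (-t) / p by positivity)
    rw [log_div (exp_pos _).ne' hp.ne', log_exp] at h
    have h2 : p * (-t - log p) ≤ p * (exp (-t) / p - 1) := by gcongr
    have h3 : p * (exp (-t) / p - 1) = exp (-t) - p := by field_simp
    rw [one_div, log_inv]
    linarith

/-- Massey's inequality: if `X` is an integer-valued random variable with finite
variance `σ²`, then `H(X) < (1/2) ln(2πe(σ² + 1/12))`. -/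
theorem massey_inequality
    (p : ℤ → ℝ) (hp0 : ∀ k, 0 ≤ p k) (hp1 : ∑' k, p k = 1)
    (μ : ℝ) (hμ : μ = ∑' k : ℤ, (k : ℝ) * p k)
    (hμs : Summable (fun k : ℤ => (k : ℝ) * p k))
    (σ2 : ℝ) (hσ2 : σ2 = ∑' k : ℤ, ((k : ℝ) - μ) ^ 2 * p k)
    (hσ2s : Summable (fun k : ℤ => ((k : ℝ) - μ) ^ 2 * p k)) :
    (∑' k, p k * Real.log (1 / p k)) <
      (1 / 2) * Real.log (2 * π * Real.exp 1 * (σ2 + 1 / 12)) := by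
  have hps : Summable p := by
    by_contra h
    rw [tsum_eq_zero_of_not_summable h] at hp1
    exact zero_ne_one hp1
  have hσ0 : 0 ≤ σ2 := by
    rw [hσ2]
    exact tsum_nonneg fun k => mul_nonneg (sq_nonneg _) (hp0 k)
  have hs : 0 < σ2 + 1 / 12 := by positivity
  set s := σ2 + 1 / 12 with hsdef
  have hZ : 0 < 2 * π * s := by positivity
  set A := 1 / 2 * log (2 * π * s) with hA
  have hexpA : exp (-A) = (√(2 * π * s))⁻¹ := by
    rw [exp_neg, hA, sqrt_eq_rpow, rpow_def_of_pos hZ, mul_comm]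
  -- `t k = log (1 / r k)`
  set t : ℤ → ℝ := fun k => A + 1 / (2 * s) * (((k : ℝ) - μ) ^ 2 + 1 / 12) with ht
  have hr : ∀ k, exp (-t k) =
      (√(2 * π * s))⁻¹ * exp (-(1 / (2 * s)) * (((k : ℝ) - μ) ^ 2 + 1 / 12)) := by
    intro k
    rw [← hexpA, ← exp_add]
    congr 1
    simp only [ht]
    ring
  obtain ⟨hcs, hclt⟩ := tsum_cell_lt μ s hs
  have hrs : Summable fun k => exp (-t k) := by
    simp only [hr]
    exact hcs.mul_left _
  have hrlt : ∑' k, exp (-t k) < 1 := by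
    simp only [hr]
    rw [tsum_mul_left, inv_mul_lt_iff₀ (sqrt_pos.2 hZ), mul_one]
    exact hclt
  have hpt : HasSum (fun k => p k * t k) (A + 1 / 2) := by
    have h1 := (hps.hasSum.mul_left (A + 1 / (2 * s) * (1 / 12))).add
      (hσ2s.hasSum.mul_left (1 / (2 * s)))
    rw [hp1, ← hσ2] at h1
    have hterm : (fun k => p k * t k) = fun k : ℤ => (A + 1 / (2 * s) * (1 / 12)) * p k +
        1 / (2 * s) * (((k : ℝ) - μ) ^ 2 * p k) := by
      funext k
      simp only [ht]
      ring
    have htotal : A + 1 / 2 = (A + 1 / (2 * s) * (1 / 12)) * 1 + 1 / (2 * s) * σ2 := by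
      have : σ2 = s - 1 / 12 := by rw [hsdef]; ring
      rw [this]
      field_simp
      ring
    rw [hterm, htotal]
    exact h1
  have hbd : HasSum (fun k => p k * t k + (exp (-t k) - p k))
      (A + 1 / 2 + (∑' k, exp (-t k) - 1)) := by
    have h := hpt.add (hrs.hasSum.sub hps.hasSum)
    rwa [hp1] at h
  have hle : ∀ k, p k * log (1 / p k) ≤ p k * t k + (exp (-t k) - p k) :=
    fun k => mul_log_one_div_le _ _ (hp0 k)
  have hnn : ∀ k, 0 ≤ p k * log (1 / p k) := by
    intro k
    have hk : p k ≤ 1 := hp1 ▸ hps.le_tsum k fun j _ => hp0 j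
    rw [one_div, log_inv]
    exact mul_nonneg (hp0 k) (neg_nonneg.2 (log_nonpos (hp0 k) hk))
  have hH := (Summable.of_nonneg_of_le hnn hle hbd.summable).tsum_le_tsum hle hbd.summable
  rw [hbd.tsum_eq] at hH
  have hR : 1 / 2 * log (2 * π * exp 1 * s) = A + 1 / 2 := by
    rw [show 2 * π * exp 1 * s = 2 * π * s * exp 1 by ring,
      log_mul hZ.ne' (exp_pos _).ne', log_exp, hA]
    ring
  rw [hR]
  linarith
end

section
/- Let X be a random variable taking values in the nonnegative integers with finite mean μ. Then H(X) < ln( e(μ + 1/2) ) = 1 + ln(μ + 1/2). -/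
open MeasureTheory Real

/-!
By Gibbs' inequality, `H(X)` is at most the cross entropy of `p` relative to any geometric law
`q n = (1 - exp (-s)) * exp (-s) ^ n`, which equals `s * μ - log (1 - exp (-s))`.
Taking `s = 1 / (μ + 1/2)`, which is only approximately the optimal parameter, gives `s * μ = 1 - s / 2`,
and the claim reduces to `s < exp (s / 2) - exp (-s / 2) = 2 * sinh (s / 2)`, true for `s > 0`.
This choice also covers `μ = 0` without a separate case.
-/

/-- Termwise Gibbs inequality against a positive weight `q = exp (-L)`. -/
lemma mul_log_one_div_le_s12 (x L : ℝ) (hx : 0 ≤ x) :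
    x * Real.log (1 / x) ≤ x * L + Real.exp (-L) - x := by
  rcases hx.eq_or_lt with rfl | hx
  · simpa using (Real.exp_pos (-L)).le
  · have h := Real.log_le_sub_one_of_pos (div_pos (Real.exp_pos (-L)) hx)
    rw [Real.log_div (Real.exp_pos _).ne' hx.ne', Real.log_exp] at h
    have h2 := mul_le_mul_of_nonneg_left h hx.le
    have h3 : x * (Real.exp (-L) / x - 1) = Real.exp (-L) - x := by field_simp
    rw [one_div, Real.log_inv]
    linarith

/-- The estimate `s < 2 * sinh (s / 2)` in logarithmic form. -/
lemma log_lt_half_add_log (s : ℝ) (hs : 0 < s) :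
    Real.log s < s / 2 + Real.log (1 - Real.exp (-s)) := by
  have h1 : 0 < 1 - Real.exp (-s) := by
    have : Real.exp (-s) < 1 := by simpa using hs
    linarith
  have h := Real.self_lt_sinh_iff.2 (half_pos hs)
  rw [Real.sinh_eq] at h
  have h2 : Real.exp (s / 2) * (1 - Real.exp (-s)) = Real.exp (s / 2) - Real.exp (-(s / 2)) := by
    rw [mul_sub, mul_one, ← Real.exp_add]
    ring_nf
  have h3 : s < Real.exp (s / 2) * (1 - Real.exp (-s)) := by rw [h2]; linarith
  have h4 := Real.log_lt_log hs h3
  rwa [Real.log_mul (Real.exp_pos _).ne' h1.ne', Real.log_exp] at h4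

/-- If `X` takes values in the nonnegative integers and has finite mean `μ`, then
`H(X) < ln(e(μ + 1/2)) = 1 + ln(μ + 1/2)`. -/
theorem entropy_lt_log_mean
    (p : ℕ → ℝ) (hp0 : ∀ n, 0 ≤ p n) (hp1 : ∑' n, p n = 1)
    (μ : ℝ) (hμ : μ = ∑' n : ℕ, (n : ℝ) * p n)
    (hμs : Summable (fun n : ℕ => (n : ℝ) * p n)) :
    (∑' n, p n * Real.log (1 / p n)) < 1 + Real.log (μ + 1 / 2) := by
  have hμ0 : 0 ≤ μ := hμ ▸ tsum_nonneg fun n => mul_nonneg n.cast_nonneg (hp0 n)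
  -- A non-summable `p` would have `tsum` equal to the default value `0`, not `1`.
  have hps : Summable p := by
    by_contra h
    rw [tsum_eq_zero_of_not_summable h] at hp1
    exact zero_ne_one hp1
  have hp : HasSum p 1 := hp1 ▸ hps.hasSum
  have hm : HasSum (fun n : ℕ => (n : ℝ) * p n) μ := hμ ▸ hμs.hasSum
  obtain ⟨s, hs⟩ : ∃ s, s = (μ + 1 / 2)⁻¹ := ⟨_, rfl⟩
  have hs0 : 0 < s := by rw [hs]; positivity
  have hsμ : s * μ = 1 - s / 2 := by
    rw [hs]
    field_simp
    ring
  have hr1 : Real.exp (-s) < 1 := by simpa using hs0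
  obtain ⟨c, hc⟩ : ∃ c, c = Real.log (1 - Real.exp (-s)) := ⟨_, rfl⟩
  have hq : HasSum (fun n : ℕ => Real.exp (-(s * n - c))) 1 := by
    have h := (hasSum_geometric_of_lt_one (Real.exp_pos (-s)).le hr1).mul_left
      (1 - Real.exp (-s))
    rw [mul_inv_cancel₀ (by linarith)] at h
    refine h.congr_fun fun n => ?_
    rw [← Real.exp_nat_mul, neg_sub, sub_eq_add_neg, Real.exp_add, hc,
      Real.exp_log (by linarith)]
    ring_nf
  have hbound : HasSum (fun n : ℕ => p n * (s * n - c) + Real.exp (-(s * n - c)) - p n)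
      (s * μ - c) := by
    have h := (((hm.mul_left s).sub (hp.mul_left c)).add hq).sub hp
    rw [mul_one, add_sub_cancel_right] at h
    exact h.congr_fun fun n => by ring
  have hle : ∀ n : ℕ, p n * Real.log (1 / p n) ≤
      p n * (s * n - c) + Real.exp (-(s * n - c)) - p n :=
    fun n => mul_log_one_div_le_s12 _ _ (hp0 n)
  have hnonneg : ∀ n, 0 ≤ p n * Real.log (1 / p n) := fun n => by
    have h1 : p n ≤ 1 := le_hasSum hp n fun m _ => hp0 m
    rw [one_div, Real.log_inv]
    exact mul_nonneg (hp0 n) (neg_nonneg.2 (Real.log_nonpos (hp0 n) h1))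
  have hH := Summable.of_nonneg_of_le hnonneg hle hbound.summable
  have hfin := hH.tsum_le_tsum hle hbound.summable
  rw [hbound.tsum_eq] at hfin
  have hlog := log_lt_half_add_log s hs0
  rw [← hc] at hlog
  have hls : Real.log s = -Real.log (μ + 1 / 2) := by rw [hs, Real.log_inv]
  linarith
end

section
/- Let X be a random variable taking values in the nonnegative integers with finite mean μ, and let α > 1/2, α ≠ 1. Then H_α(X) < ln(μ + 1/2) + (α/(1−α)) ln( α/(2α−1) ). -/
open MeasureTheory Real

/-!
Put `m = μ + 1/2`, the mean of `X + U` with `U` uniform on `[0, 1]`. The bound is the maximal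
differential Rényi entropy of a density on `[0, ∞)` with mean `m`; the extremal density is a power
of an affine function `L`, and the proof is Hölder's inequality against that power, sampled at the
midpoints `n + 1/2`, so that `∑ p n * L (n + 1/2)` is determined by `m`.

* For `α < 1`, let `s = α / (1 - α) > 1` and `L x = 1 + b x` with `b = 1 / (m (s - 1))`. Hölder gives
  `∑ p ^ α ≤ (∑ p L) ^ α * (∑ L ^ (-s)) ^ (1 - α)`, where `∑ p L = 1 + b m = α / (2α - 1)`.
* For `α > 1`, let `q = α / (α - 1) > 1` and `L x = max (1 - b x) 0` with `b = 1 / (m (q + 1))`.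
  Hölder gives `α / (2α - 1) = 1 - b m ≤ ∑ p L ≤ (∑ p ^ α) ^ (1/α) * (∑ L ^ q) ^ (1/q)`.

The functions `L ^ (-s)` and `L ^ q` are convex and have integral `m` over `[0, ∞)`, so their
midpoint sums are smaller than `m` (`tsum_neg_rpow_lt`, `tsum_rpow_lt`). This is the only place
where strictness arises. The integrals are replaced by telescoping antiderivatives.
-/

/-- Strict midpoint (Hermite–Hadamard) inequality for a function `f` with antiderivative `F`;
only strict convexity about the centre `c` is needed. -/
lemma midpoint_lt_sub (F f : ℝ → ℝ) (c h : ℝ) (hh : 0 < h)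
    (hF : ∀ x ∈ Set.Icc (c - h) (c + h), HasDerivAt F (f x) x)
    (hf : ∀ t ∈ Set.Ioo 0 h, 2 * f c < f (c - t) + f (c + t)) :
    2 * h * f c < F (c + h) - F (c - h) := by
  have hd : ∀ t ∈ Set.Icc 0 h, HasDerivAt (fun t => F (c + t) - F (c - t) - 2 * t * f c)
      (f (c + t) + f (c - t) - 2 * f c) t := by
    intro t ht
    have h1 := (hF (c + t) ⟨by linarith [ht.1], by linarith [ht.2]⟩).comp_const_add c t
    have h2 := (hF (c - t) ⟨by linarith [ht.2], by linarith [ht.1]⟩).comp_const_sub c t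
    have h3 : HasDerivAt (fun t : ℝ => 2 * t * f c) (2 * f c) t := by
      simpa using ((hasDerivAt_id t).const_mul 2).mul_const (f c)
    exact ((h1.sub h2).sub h3).congr_deriv (by ring)
  have hm := strictMonoOn_of_deriv_pos (convex_Icc 0 h)
    (fun t ht => (hd t ht).continuousAt.continuousWithinAt) (fun t ht => by
      rw [interior_Icc] at ht
      rw [(hd t ⟨ht.1.le, ht.2.le⟩).deriv]
      linarith [hf t ht])
  have := hm ⟨le_rfl, hh.le⟩ ⟨hh.le, le_rfl⟩ hh
  simp only [add_zero, sub_zero, mul_zero, zero_mul, sub_self] at this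
  linarith

lemma neg_rpow_midpoint (s u h : ℝ) (hs : 1 < s) (hh : 0 < h) (hu : h < u) :
    2 * h * ((s - 1) * u ^ (-s)) < (u - h) ^ (1 - s) - (u + h) ^ (1 - s) := by
  have key := midpoint_lt_sub (fun x => - x ^ (1 - s)) (fun x => (s - 1) * x ^ (-s)) u h hh ?_ ?_
  · linarith
  · intro x hx
    have hx0 : x ≠ 0 := by linarith [hx.1]
    refine (Real.hasDerivAt_rpow_const (p := 1 - s) (Or.inl hx0)).neg.congr_deriv ?_
    rw [show 1 - s - 1 = -s by ring]; ring
  · intro t ht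
    -- AM-GM: `(u-t)^(-s) + (u+t)^(-s) ≥ 2 (u²-t²)^(-s/2) > 2 u^(-s)`
    have h1 : 0 < u - t := by linarith [ht.2]
    have h2 : 0 < u + t := by linarith [ht.1]
    have sq : ∀ x : ℝ, 0 < x → x ^ (-s) = x ^ (-s / 2) * x ^ (-s / 2) := fun x hx => by
      rw [← Real.rpow_add hx]; congr 1; ring
    have hlt : (u * u) ^ (-s / 2) < ((u - t) * (u + t)) ^ (-s / 2) := by
      apply Real.rpow_lt_rpow_of_neg (by positivity) _ (by linarith)
      nlinarith [ht.1]
    rw [Real.mul_rpow (by linarith) (by linarith), Real.mul_rpow h1.le h2.le,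
      ← sq u (by linarith)] at hlt
    have := sq_nonneg ((u - t) ^ (-s / 2) - (u + t) ^ (-s / 2))
    have hs1 : 0 < s - 1 := by linarith
    have : 2 * u ^ (-s) < (u - t) ^ (-s) + (u + t) ^ (-s) := by
      rw [sq _ h1, sq _ h2]; nlinarith
    nlinarith

lemma rpow_midpoint (q u h : ℝ) (hq : 1 < q) (hh : 0 < h) (hu : 0 < u) :
    2 * h * ((q + 1) * u ^ q) < (u + h) ^ (q + 1) - (max (u - h) 0) ^ (q + 1) := by
  rcases le_total h u with hhu | hhu
  · rw [max_eq_left (by linarith)]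
    refine midpoint_lt_sub (fun x => x ^ (q + 1)) (fun x => (q + 1) * x ^ q) u h hh ?_ ?_
    · intro x hx
      refine (Real.hasDerivAt_rpow_const (p := q + 1) (Or.inr (by linarith))).congr_deriv ?_
      rw [add_sub_cancel_right]
    · intro t ht
      have h1 : (0 : ℝ) ≤ u - t := by linarith [ht.2]
      have h2 : (0 : ℝ) ≤ u + t := by linarith [ht.1]
      have := (strictConvexOn_rpow hq).2 (Set.mem_Ici.2 h1) (Set.mem_Ici.2 h2)
        (by linarith [ht.1] : u - t ≠ u + t)
        (by norm_num : (0 : ℝ) < 1 / 2) (by norm_num : (0 : ℝ) < 1 / 2) (by norm_num)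
      simp only [smul_eq_mul] at this
      rw [show 1 / 2 * (u - t) + 1 / 2 * (u + t) = u by ring] at this
      nlinarith
  · -- Here the positive part vanishes at the left endpoint. With `h = r u`, `r ≥ 1`, the claim is
    -- `2 r (q + 1) < (1 + r) ^ (q + 1)`, from Bernoulli applied to `1 + r = 2 (1 + (r - 1) / 2)`.
    rw [max_eq_right (by linarith), Real.zero_rpow (by linarith), sub_zero]
    obtain ⟨r, rfl⟩ : ∃ r, h = r * u := ⟨h / u, by field_simp⟩
    have hr : 1 ≤ r := by
      by_contra hc
      nlinarith
    have h2 := one_add_mul_self_lt_rpow_one_add (s := 1) (by norm_num) one_ne_zero hq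
    have h3 := one_add_mul_self_le_rpow_one_add (s := (r - 1) / 2) (by linarith)
      (p := q + 1) (by linarith)
    have e : (u + r * u) = 2 * (1 + (r - 1) / 2) * u := by ring
    rw [e, Real.mul_rpow (by linarith) hu.le, Real.mul_rpow (by norm_num) (by linarith),
      Real.rpow_add_one (by norm_num : (2 : ℝ) ≠ 0), Real.rpow_add_one hu.ne']
    norm_num at h2
    have hup : 0 < u ^ q * u := by positivity
    have h4 : r ≤ 1 + (q + 1) * ((r - 1) / 2) := by nlinarith
    have h5 : (1 + q) * r < 2 ^ q * (1 + (r - 1) / 2) ^ (q + 1) :=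
      mul_lt_mul h2 (h4.trans h3) (by linarith) (by positivity)
    nlinarith

lemma tsum_lt_of_telescope (a G : ℕ → ℝ) (ha : ∀ n, 0 ≤ a n) (hG : ∀ n, 0 ≤ G n)
    (h : ∀ n, a n ≤ G n - G (n + 1)) (h0 : a 0 < G 0 - G 1) :
    Summable a ∧ ∑' n, a n < G 0 := by
  have key : ∀ k N, ∑ i ∈ Finset.range N, a (i + k) ≤ G k := by
    intro k N
    have : ∑ i ∈ Finset.range N, a (i + k) ≤ G k - G (N + k) := by
      induction N with
      | zero => simp
      | succ N ih =>
        rw [Finset.sum_range_succ]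
        have := h (N + k)
        rw [show N + 1 + k = N + k + 1 by ring]
        linarith
    linarith [hG (N + k)]
  have hs : Summable a := summable_of_sum_range_le ha (key 0)
  refine ⟨hs, ?_⟩
  rw [hs.tsum_eq_zero_add]
  have := Real.tsum_le_of_sum_range_le (fun n => ha (n + 1)) (key 1)
  linarith

lemma tsum_neg_rpow_lt (s m b : ℝ) (hs : 1 < s) (hm : 0 < m) (hb : b = 1 / (m * (s - 1))) :
    Summable (fun n : ℕ => (1 + b * (n + 1 / 2)) ^ (-s)) ∧
      ∑' n : ℕ, (1 + b * (n + 1 / 2)) ^ (-s) < m := by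
  have hs1 : 0 < s - 1 := by linarith
  have hb0 : 0 < b := by rw [hb]; positivity
  have hbm : m * (b * (s - 1)) = 1 := by rw [hb]; field_simp
  have step : ∀ n : ℕ, (1 + b * ((n : ℝ) + 1 / 2)) ^ (-s) <
      m * (1 + b * (n : ℝ)) ^ (1 - s) - m * (1 + b * ((n + 1 : ℕ) : ℝ)) ^ (1 - s) := by
    intro n
    have hn : 0 ≤ b * (n : ℝ) := by positivity
    have := neg_rpow_midpoint s (1 + b * ((n : ℝ) + 1 / 2)) (b / 2) hs (by positivity)
      (by linarith)
    rw [show 1 + b * ((n : ℝ) + 1 / 2) - b / 2 = 1 + b * n by ring,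
      show 1 + b * ((n : ℝ) + 1 / 2) + b / 2 = 1 + b * ((n + 1 : ℕ) : ℝ) by push_cast; ring] at this
    have h2 := mul_lt_mul_of_pos_left this hm
    have h3 : m * (2 * (b / 2) * ((s - 1) * (1 + b * ((n : ℝ) + 1 / 2)) ^ (-s))) =
      m * (b * (s - 1)) * (1 + b * ((n : ℝ) + 1 / 2)) ^ (-s) := by ring
    rw [h3, hbm] at h2
    linarith
  have := tsum_lt_of_telescope (fun n : ℕ => (1 + b * ((n : ℝ) + 1 / 2)) ^ (-s))
    (fun n => m * (1 + b * (n : ℝ)) ^ (1 - s)) (fun n => by positivity) (fun n => by positivity)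
    (fun n => (step n).le) (step 0)
  simpa using this

lemma tsum_rpow_lt (q m b : ℝ) (hq : 1 < q) (hm : 1 / 2 ≤ m) (hb : b = 1 / (m * (q + 1))) :
    Summable (fun n : ℕ => (max (1 - b * (n + 1 / 2)) 0) ^ q) ∧
      ∑' n : ℕ, (max (1 - b * (n + 1 / 2)) 0) ^ q < m := by
  have hm0 : 0 < m := by linarith
  have hb0 : 0 < b := by rw [hb]; positivity
  have hbm : m * (b * (q + 1)) = 1 := by rw [hb]; field_simp
  have hb2 : b < 1 := by
    rw [hb, div_lt_one (by positivity)]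
    nlinarith
  have step : ∀ n : ℕ, 0 < 1 - b * ((n : ℝ) + 1 / 2) →
      (max (1 - b * ((n : ℝ) + 1 / 2)) 0) ^ q <
      m * (max (1 - b * (n : ℝ)) 0) ^ (q + 1)
        - m * (max (1 - b * ((n + 1 : ℕ) : ℝ)) 0) ^ (q + 1) := by
    intro n hn
    have := rpow_midpoint q (1 - b * ((n : ℝ) + 1 / 2)) (b / 2) hq (by positivity) hn
    rw [show 1 - b * ((n : ℝ) + 1 / 2) - b / 2 = 1 - b * ((n + 1 : ℕ) : ℝ) by push_cast; ring,
      show 1 - b * ((n : ℝ) + 1 / 2) + b / 2 = 1 - b * n by ring] at this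
    have h2 := mul_lt_mul_of_pos_left this hm0
    have h3 : m * (2 * (b / 2) * ((q + 1) * (1 - b * ((n : ℝ) + 1 / 2)) ^ q)) =
      m * (b * (q + 1)) * (1 - b * ((n : ℝ) + 1 / 2)) ^ q := by ring
    rw [h3, hbm] at h2
    rw [max_eq_left hn.le, max_eq_left (a := 1 - b * (n : ℝ)) (by linarith)]
    linarith
  have step' : ∀ n : ℕ, (max (1 - b * ((n : ℝ) + 1 / 2)) 0) ^ q ≤
      m * (max (1 - b * (n : ℝ)) 0) ^ (q + 1)
        - m * (max (1 - b * ((n + 1 : ℕ) : ℝ)) 0) ^ (q + 1) := by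
    intro n
    rcases lt_or_ge 0 (1 - b * ((n : ℝ) + 1 / 2)) with hn | hn
    · exact (step n hn).le
    · rw [max_eq_right hn, Real.zero_rpow (by linarith), sub_nonneg]
      gcongr
      linarith
  have := tsum_lt_of_telescope (fun n : ℕ => (max (1 - b * ((n : ℝ) + 1 / 2)) 0) ^ q)
    (fun n => m * (max (1 - b * (n : ℝ)) 0) ^ (q + 1)) (fun n => by positivity)
    (fun n => by positivity) step' (step 0 (by push_cast; linarith))
  simpa using this

/-- The case `α < 1`, in the form obtained after multiplying by `1 - α > 0`. -/
lemma log_tsum_lt (α : ℝ) (hα : 1 / 2 < α) (hα1 : α < 1)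
    (p : ℕ → ℝ) (hp0 : ∀ n, 0 ≤ p n) (hp1 : HasSum p 1) (m : ℝ) (hm : 0 < m)
    (hpm : HasSum (fun n : ℕ => ((n : ℝ) + 1 / 2) * p n) m) :
    Real.log (∑' n, p n ^ α) < (1 - α) * Real.log m + α * Real.log (α / (2 * α - 1)) := by
  have h1 : 0 < 1 - α := by linarith
  have h2 : 0 < 2 * α - 1 := by linarith
  have h3 : 0 < α := by linarith
  set s := α / (1 - α) with hs
  have hs1 : s - 1 = (2 * α - 1) / (1 - α) := by rw [hs]; field_simp; ring
  have hs2 : 1 < s := by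
    have : 0 < s - 1 := by rw [hs1]; positivity
    linarith
  set b := 1 / (m * (s - 1)) with hb
  have hb0 : 0 < b := by rw [hb, hs1]; positivity
  obtain ⟨hTs, hT⟩ := tsum_neg_rpow_lt s m b hs2 hm hb
  set L : ℕ → ℝ := fun n => 1 + b * ((n : ℝ) + 1 / 2) with hL
  have hL0 : ∀ n, 0 < L n := fun n => by simp only [hL]; positivity
  have hpL : HasSum (fun n => p n * L n) (α / (2 * α - 1)) := by
    have e : α / (2 * α - 1) = 1 + b * m := by
      have hbm : b * m = (1 - α) / (2 * α - 1) := by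
        rw [hb, hs1]; field_simp
      rw [hbm, div_eq_iff h2.ne', add_mul, div_mul_cancel₀ _ h2.ne']
      ring
    rw [e]
    refine (hp1.add (hpm.mul_left b)).congr_fun ?_
    intro n; simp only [hL]; ring
  have ef : ∀ n, ((p n * L n) ^ α) ^ (1 / α) = p n * L n := fun n => by
    rw [← Real.rpow_mul (mul_nonneg (hp0 n) (hL0 n).le), mul_one_div_cancel h3.ne', Real.rpow_one]
  have eg : ∀ n, ((L n) ^ (-α)) ^ (1 / (1 - α)) = L n ^ (-s) := fun n => by
    rw [← Real.rpow_mul (hL0 n).le]; congr 1; rw [hs]; ring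
  have efg : ∀ n, (p n * L n) ^ α * (L n) ^ (-α) = p n ^ α := fun n => by
    rw [Real.mul_rpow (hp0 n) (hL0 n).le, mul_assoc, ← Real.rpow_add (hL0 n)]; simp
  have hol := Real.summable_and_inner_le_Lp_mul_Lq_tsum_of_nonneg
    (Real.holderConjugate_one_div h3 h1 (by ring))
    (f := fun n => (p n * L n) ^ α) (g := fun n => (L n) ^ (-α))
    (fun n => Real.rpow_nonneg (mul_nonneg (hp0 n) (hL0 n).le) _)
    (fun n => Real.rpow_nonneg (hL0 n).le _)
    (by simp only [ef]; exact hpL.summable) (by simp only [eg]; exact hTs)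
  simp only [ef, eg, efg, one_div_one_div, hpL.tsum_eq] at hol
  obtain ⟨hSs, hSle⟩ := hol
  obtain ⟨k, hk⟩ : ∃ k, 0 < p k := by
    by_contra! hc
    have : p = 0 := funext fun n => le_antisymm (hc n) (hp0 n)
    rw [this] at hp1
    exact zero_ne_one (hasSum_zero.unique hp1)
  have hS0 : 0 < ∑' n, p n ^ α :=
    hSs.tsum_pos (fun n => Real.rpow_nonneg (hp0 n) _) k (Real.rpow_pos_of_pos hk _)
  have hT0 : 0 < ∑' n, L n ^ (-s) :=
    hTs.tsum_pos (fun n => Real.rpow_nonneg (hL0 n).le _) 0 (Real.rpow_pos_of_pos (hL0 0) _)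
  have hA : 0 < α / (2 * α - 1) := by positivity
  have hlog := Real.log_le_log hS0 hSle
  rw [Real.log_mul (by positivity) (by positivity), Real.log_rpow hA, Real.log_rpow hT0] at hlog
  have := Real.log_lt_log hT0 hT
  nlinarith

/-- The case `α > 1`, in the form obtained after multiplying by `1 - α < 0`. -/
lemma lt_log_tsum (α : ℝ) (hα : 1 < α)
    (p : ℕ → ℝ) (hp0 : ∀ n, 0 ≤ p n) (hp1 : HasSum p 1) (m : ℝ) (hm : 1 / 2 ≤ m)
    (hpm : HasSum (fun n : ℕ => ((n : ℝ) + 1 / 2) * p n) m) :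
    (1 - α) * Real.log m + α * Real.log (α / (2 * α - 1)) < Real.log (∑' n, p n ^ α) := by
  have h1 : 0 < α - 1 := by linarith
  have h2 : 0 < 2 * α - 1 := by linarith
  have h3 : 0 < α := by linarith
  have hm0 : 0 < m := by linarith
  set q := α / (α - 1) with hq
  have hq1 : q + 1 = (2 * α - 1) / (α - 1) := by rw [hq]; field_simp; ring
  have hq2 : 1 < q := by rw [hq, one_lt_div h1]; linarith
  set b := 1 / (m * (q + 1)) with hb
  have hb0 : 0 < b := by rw [hb, hq1]; positivity
  obtain ⟨hTs, hT⟩ := tsum_rpow_lt q m b hq2 hm hb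
  set L : ℕ → ℝ := fun n => max (1 - b * ((n : ℝ) + 1 / 2)) 0 with hL
  have hL0 : ∀ n, 0 ≤ L n := fun n => le_max_right _ _
  have hpA : HasSum (fun n : ℕ => p n * (1 - b * ((n : ℝ) + 1 / 2))) (α / (2 * α - 1)) := by
    have e : α / (2 * α - 1) = 1 - b * m := by
      have hbm : b * m = (α - 1) / (2 * α - 1) := by
        rw [hb, hq1]; field_simp
      rw [hbm, div_eq_iff h2.ne', sub_mul, div_mul_cancel₀ _ h2.ne']
      ring
    rw [e]
    refine (hp1.sub (hpm.mul_left b)).congr_fun ?_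
    intro n; ring
  have hple : ∀ n, p n ≤ 1 := fun n => le_hasSum hp1 n (fun j _ => hp0 j)
  have hSs : Summable (fun n => p n ^ α) :=
    Summable.of_nonneg_of_le (fun n => Real.rpow_nonneg (hp0 n) _)
      (fun n => (Real.rpow_le_rpow_of_exponent_ge' (hp0 n) (hple n) zero_le_one hα.le).trans_eq
        (Real.rpow_one _)) hp1.summable
  have hpq : α.HolderConjugate q := Real.HolderConjugate.conjExponent hα
  obtain ⟨hPs, hPle⟩ := Real.summable_and_inner_le_Lp_mul_Lq_tsum_of_nonneg hpq hp0 hL0 hSs hTs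
  have hA : 0 < α / (2 * α - 1) := by positivity
  have hAle : α / (2 * α - 1) ≤ (∑' n, p n ^ α) ^ (1 / α) * (∑' n, L n ^ q) ^ (1 / q) :=
    (hasSum_le (fun n => mul_le_mul_of_nonneg_left (le_max_left _ _) (hp0 n)) hpA
      hPs.hasSum).trans hPle
  have hS0 : 0 < ∑' n, p n ^ α := by
    refine (tsum_nonneg fun n => Real.rpow_nonneg (hp0 n) _).lt_of_ne' fun h0 => ?_
    rw [h0, Real.zero_rpow (by positivity), zero_mul] at hAle
    linarith
  have hT0 : 0 < ∑' n, L n ^ q := by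
    refine (tsum_nonneg fun n => Real.rpow_nonneg (hL0 n) _).lt_of_ne' fun h0 => ?_
    rw [h0, Real.zero_rpow (by positivity), mul_zero] at hAle
    linarith
  have hlog := Real.log_le_log hA hAle
  rw [Real.log_mul (by positivity) (by positivity), Real.log_rpow hS0, Real.log_rpow hT0] at hlog
  have hlt := Real.log_lt_log hT0 hT
  have h5 := mul_le_mul_of_nonneg_left hlog h3.le
  have h6 : α * (1 / α * Real.log (∑' n, p n ^ α) + 1 / q * Real.log (∑' n, L n ^ q)) =
      Real.log (∑' n, p n ^ α) + (α - 1) * Real.log (∑' n, L n ^ q) := by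
    rw [hq]; field_simp
  rw [h6] at h5
  nlinarith


/-- If `X` takes values in the nonnegative integers with finite mean `μ`, and `α > 1/2`,
`α ≠ 1`, then `H_α(X) < ln(μ + 1/2) + (α/(1-α)) ln(α/(2α-1))`. -/
theorem renyi_entropy_lt_log_mean
    (α : ℝ) (hα : 1 / 2 < α) (hα1 : α ≠ 1)
    (p : ℕ → ℝ) (hp0 : ∀ n, 0 ≤ p n) (hp1 : ∑' n, p n = 1)
    (μ : ℝ) (hμ : μ = ∑' n : ℕ, (n : ℝ) * p n)
    (hμs : Summable (fun n : ℕ => (n : ℝ) * p n)) :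
    (1 / (1 - α)) * Real.log (∑' n, p n ^ α) <
      Real.log (μ + 1 / 2) + (α / (1 - α)) * Real.log (α / (2 * α - 1)) := by
  have hps : Summable p := by
    by_contra hc
    rw [tsum_eq_zero_of_not_summable hc] at hp1
    exact zero_ne_one hp1
  have hP1 : HasSum p 1 := hp1 ▸ hps.hasSum
  have hμ0 : 0 ≤ μ := hμ ▸ tsum_nonneg fun n => mul_nonneg n.cast_nonneg (hp0 n)
  have hpm : HasSum (fun n : ℕ => ((n : ℝ) + 1 / 2) * p n) (μ + 1 / 2) := by
    have h := (hμ ▸ hμs.hasSum : HasSum (fun n : ℕ => (n : ℝ) * p n) μ).add (hP1.mul_left (1 / 2))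
    rw [mul_one] at h
    refine h.congr_fun ?_
    intro n; ring
  have e : Real.log (μ + 1 / 2) + (α / (1 - α)) * Real.log (α / (2 * α - 1)) =
      (1 / (1 - α)) * ((1 - α) * Real.log (μ + 1 / 2) + α * Real.log (α / (2 * α - 1))) := by
    have : 1 - α ≠ 0 := sub_ne_zero.2 hα1.symm
    field_simp
  rw [e]
  rcases lt_or_gt_of_ne hα1 with h | h
  · exact mul_lt_mul_of_pos_left (log_tsum_lt α hα h p hp0 hP1 _ (by linarith) hpm)
      (one_div_pos.2 (by linarith))
  · exact mul_lt_mul_of_neg_left (lt_log_tsum α h p hp0 hP1 _ (by linarith) hpm)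
      (one_div_neg.2 (by linarith))
end
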